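/- arXiv:2605.22553 — 7 statements merged into one kernel-verified Lean document; each statement's English description precedes it below -/
import Mathlib

section
/- Let k ≥ 2, let G be a graph, let Φ be a maximal k-clique-cover of G, let 1 ≤ i ≤ k − 1, and let K and K′ be two distinct cliques in Φ_i (both of order i). Then the complement of the bipartite graph induced by G between V(K) and V(K′) contains a perfect matching; that is, there is a bijection f : V(K) → V(K′) such that v and f(v) are nonadjacent in G for every v ∈ V(K). -/
/-- `Φ` is a `k`-clique-cover of `G`: a collection of pairwise vertex-disjoint cliques,
each of order between `1` and `k`, whose vertex sets partition `V(G)`. -/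
def IsCliqueCover {V : Type*} (G : SimpleGraph V) (k : ℕ) (Φ : Finset (Finset V)) : Prop :=
  (∀ S ∈ Φ, G.IsClique (S : Set V) ∧ 1 ≤ S.card ∧ S.card ≤ k) ∧
  ((Φ : Set (Finset V)).Pairwise fun S T => Disjoint S T) ∧
  ∀ v : V, ∃ S ∈ Φ, v ∈ S

/-- `coverVec Φ i = |Φ_i|`, the number of cliques of order `i` in `Φ`. -/
def coverVec {V : Type*} (Φ : Finset (Finset V)) (i : ℕ) : ℕ :=
  (Φ.filter fun S => S.card = i).card

/-- `Φ` is a maximal `k`-clique-cover of `G`: the vector `(|Φ_k|, …, |Φ_1|)` is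
lexicographically maximal among all `k`-clique-covers of `G`. -/
def IsMaxCliqueCover {V : Type*} (G : SimpleGraph V) (k : ℕ) (Φ : Finset (Finset V)) : Prop :=
  IsCliqueCover G k Φ ∧
  ∀ Ψ : Finset (Finset V), IsCliqueCover G k Ψ →
    ∀ j, 1 ≤ j → j ≤ k →
      (∀ i, j < i → i ≤ k → coverVec Ψ i = coverVec Φ i) →
      coverVec Ψ j ≤ coverVec Φ j

/-- **Claim.** If `Φ` is a maximal `k`-clique-cover of `G` and `K ≠ K'` are two cliques of
`Φ` of the same order `i ≤ k - 1`, then the complement of the bipartite graph induced by `G`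
between `V(K)` and `V(K')` has a perfect matching: there is a bijection `f : V(K) → V(K')`
with `v` and `f v` nonadjacent in `G` for every `v ∈ K`. -/
theorem maximal_cover_complement_matching {V : Type*} [Fintype V]
    (G : SimpleGraph V) (k : ℕ) (hk : 2 ≤ k)
    (Φ : Finset (Finset V)) (hΦ : IsMaxCliqueCover G k Φ)
    (i : ℕ) (hi1 : 1 ≤ i) (hik : i ≤ k - 1)
    (K K' : Finset V) (hK : K ∈ Φ) (hK' : K' ∈ Φ) (hne : K ≠ K')
    (hcard : K.card = i) (hcard' : K'.card = i) :
    ∃ f : V → V, Set.BijOn f (K : Set V) (K' : Set V) ∧ ∀ v ∈ K, ¬ G.Adj v (f v) := by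
  classical
  obtain ⟨⟨hcl, hdisj, hcov⟩, hmax⟩ := hΦ
  have hKK' : Disjoint K K' := hdisj hK hK' hne
  have key : ∀ A B : Finset V, A ⊆ K → B ⊆ K' → A.Nonempty → B.Nonempty →
      A.card + B.card = i + 1 → (∀ a ∈ A, ∀ b ∈ B, G.Adj a b) → False := by
    intro A B hA hB hAne hBne hAB hadj
    have hABd : Disjoint A B := Finset.disjoint_of_subset_left hA
      (Finset.disjoint_of_subset_right hB hKK')
    have hM : (A ∪ B).card = i + 1 := by rw [Finset.card_union_of_disjoint hABd, hAB]
    have hA1 := hAne.card_pos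
    have hB1 := hBne.card_pos
    have hcA : (K \ A).card < i + 1 := by
      have := Finset.card_le_card (Finset.sdiff_subset : K \ A ⊆ K); omega
    have hcB : (K' \ B).card < i + 1 := by
      have := Finset.card_le_card (Finset.sdiff_subset : K' \ B ⊆ K'); omega
    have hMΦ : A ∪ B ∉ Φ := by
      intro hmem
      by_cases h : A ∪ B = K
      · rw [h] at hM; omega
      · obtain ⟨a, ha⟩ := hAne
        exact Finset.disjoint_left.1 (hdisj hmem hK h) (Finset.mem_union_left _ ha) (hA ha)
    let Ψ : Finset (Finset V) := insert (A ∪ B) (((Φ.erase K).erase K') ∪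
      (({K \ A, K' \ B} : Finset (Finset V)).filter fun S => 1 ≤ S.card))
    have hΨ : ∀ S, S ∈ Ψ ↔ S = A ∪ B ∨ (S ≠ K' ∧ S ≠ K ∧ S ∈ Φ) ∨
        ((S = K \ A ∨ S = K' \ B) ∧ 1 ≤ S.card) := by
      intro S
      simp [Ψ]
    have hclK := (hcl K hK).1
    have hclK' := (hcl K' hK').1
    have hdK : ∀ S ∈ Φ, S ≠ K → ∀ v ∈ S, v ∉ K := fun S hS h v hv hv' =>
      Finset.disjoint_left.1 (hdisj hS hK h) hv hv'
    have hdK' : ∀ S ∈ Φ, S ≠ K' → ∀ v ∈ S, v ∉ K' := fun S hS h v hv hv' =>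
      Finset.disjoint_left.1 (hdisj hS hK' h) hv hv'
    have hd0 : ∀ v ∈ K, v ∉ K' := fun v hv hv' => Finset.disjoint_left.1 hKK' hv hv'
    have hcover : IsCliqueCover G k Ψ := by
      refine ⟨?_, ?_, ?_⟩
      · intro S hS
        rcases (hΨ S).1 hS with rfl | ⟨h1, h2, h3⟩ | ⟨rfl | rfl, h⟩
        · refine ⟨?_, by omega, by omega⟩
          intro x hx y hy hxy
          rcases Finset.mem_union.1 (Finset.mem_coe.1 hx) with hx | hx <;>
            rcases Finset.mem_union.1 (Finset.mem_coe.1 hy) with hy | hy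
          · exact hclK (hA hx) (hA hy) hxy
          · exact hadj x hx y hy
          · exact (hadj y hy x hx).symm
          · exact hclK' (hB hx) (hB hy) hxy
        · exact hcl S h3
        · exact ⟨hclK.subset (by simp), h, by omega⟩
        · exact ⟨hclK'.subset (by simp), h, by omega⟩
      · intro S hS T hT hST
        show Disjoint S T
        rw [Finset.disjoint_left]
        intro v hvS hvT
        have hAv := @hA v
        have hBv := @hB v
        have h0 := hd0 v
        have reg : ∀ S ∈ Ψ, v ∈ S → (S = A ∪ B ∧ (v ∈ A ∨ v ∈ B)) ∨
            (S ∈ Φ ∧ v ∉ K ∧ v ∉ K') ∨ (S = K \ A ∧ v ∈ K ∧ v ∉ A) ∨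
            (S = K' \ B ∧ v ∈ K' ∧ v ∉ B) := by
          intro S hS hv
          rcases (hΨ S).1 hS with h | ⟨h1, h2, h3⟩ | ⟨h | h, _⟩
          · exact Or.inl ⟨h, Finset.mem_union.1 (h ▸ hv)⟩
          · exact Or.inr (Or.inl ⟨h3, hdK S h3 h2 v hv, hdK' S h3 h1 v hv⟩)
          · exact Or.inr (Or.inr (Or.inl ⟨h, Finset.mem_sdiff.1 (h ▸ hv)⟩))
          · exact Or.inr (Or.inr (Or.inr ⟨h, Finset.mem_sdiff.1 (h ▸ hv)⟩))
        have hSr := reg S hS hvS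
        have hTr := reg T hT hvT
        have hΦΦ : S ∈ Φ → T ∈ Φ → False := fun h3 h3' =>
          Finset.disjoint_left.1 (hdisj h3 h3' hST) hvS hvT
        clear * - hSr hTr hΦΦ hAv hBv h0 hST
        rcases hSr with ⟨h, h1⟩ | ⟨h, h1, h2⟩ | ⟨h, h1, h2⟩ | ⟨h, h1, h2⟩ <;>
          rcases hTr with ⟨h', h1'⟩ | ⟨h', h1', h2'⟩ | ⟨h', h1', h2'⟩ | ⟨h', h1', h2'⟩ <;>
          first
          | exact hST (h.trans h'.symm)
          | exact hΦΦ h h'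
          | (clear h h' hST hΦΦ
             tauto)
      · intro v
        by_cases hvM : v ∈ A ∪ B
        · exact ⟨_, (hΨ _).2 (Or.inl rfl), hvM⟩
        have hvA : v ∉ A := fun h => hvM (Finset.mem_union_left _ h)
        have hvB : v ∉ B := fun h => hvM (Finset.mem_union_right _ h)
        by_cases hvK : v ∈ K
        · have : v ∈ K \ A := Finset.mem_sdiff.2 ⟨hvK, hvA⟩
          exact ⟨_, (hΨ _).2 (Or.inr (Or.inr ⟨Or.inl rfl, Finset.card_pos.2 ⟨v, this⟩⟩)), this⟩
        by_cases hvK' : v ∈ K'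
        · have : v ∈ K' \ B := Finset.mem_sdiff.2 ⟨hvK', hvB⟩
          exact ⟨_, (hΨ _).2 (Or.inr (Or.inr ⟨Or.inr rfl, Finset.card_pos.2 ⟨v, this⟩⟩)), this⟩
        obtain ⟨S, hS, hvS⟩ := hcov v
        refine ⟨S, (hΨ _).2 (Or.inr (Or.inl ⟨?_, ?_, hS⟩)), hvS⟩
        · rintro rfl; exact hvK' hvS
        · rintro rfl; exact hvK hvS
    have hle := hmax Ψ hcover (i + 1) (by omega) (by omega) (by
      intro j hj _
      unfold coverVec
      congr 1
      ext S
      rw [Finset.mem_filter, Finset.mem_filter, hΨ]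
      constructor
      · rintro ⟨rfl | ⟨h1, h2, h3⟩ | ⟨rfl | rfl, h⟩, hc⟩
        · omega
        · exact ⟨h3, hc⟩
        · omega
        · omega
      · rintro ⟨h, hc⟩
        refine ⟨Or.inr (Or.inl ⟨?_, ?_, h⟩), hc⟩
        · rintro rfl; omega
        · rintro rfl; omega)
    have heq : (Ψ.filter fun S => S.card = i + 1)
        = insert (A ∪ B) (Φ.filter fun S => S.card = i + 1) := by
      ext S
      rw [Finset.mem_insert, Finset.mem_filter, Finset.mem_filter, hΨ]
      constructor
      · rintro ⟨rfl | ⟨h1, h2, h3⟩ | ⟨rfl | rfl, h⟩, hc⟩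
        · exact Or.inl rfl
        · exact Or.inr ⟨h3, hc⟩
        · omega
        · omega
      · rintro (rfl | ⟨h, hc⟩)
        · exact ⟨Or.inl rfl, hM⟩
        · refine ⟨Or.inr (Or.inl ⟨?_, ?_, h⟩), hc⟩
          · rintro rfl; omega
          · rintro rfl; omega
    unfold coverVec at hle
    rw [heq, Finset.card_insert_of_notMem (by simp [hMΦ])] at hle
    omega
  let t : K → Finset V := fun x => K'.filter fun y => ¬ G.Adj x y
  have hall : ∀ s : Finset K, s.card ≤ (s.biUnion t).card := by
    intro s
    by_contra! hlt
    let A : Finset V := s.map (Function.Embedding.subtype _)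
    have hAc : A.card = s.card := Finset.card_map _
    have hA : A ⊆ K := by
      intro x hx
      obtain ⟨y, _, rfl⟩ := Finset.mem_map.1 hx
      exact y.2
    have hAle := Finset.card_le_card hA
    have hsub : s.biUnion t ⊆ K' := by
      intro x hx
      obtain ⟨y, _, h⟩ := Finset.mem_biUnion.1 hx
      exact (Finset.mem_filter.1 h).1
    have hc := Finset.card_sdiff_add_card_eq_card hsub
    obtain ⟨B, hB, hBc⟩ := Finset.exists_subset_card_eq
      (s := K' \ s.biUnion t) (n := i + 1 - A.card) (by omega)
    refine key A B hA (hB.trans Finset.sdiff_subset) (Finset.card_pos.1 (by omega))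
      (Finset.card_pos.1 (by omega)) (by omega) ?_
    intro a ha b hb
    obtain ⟨y, hy, rfl⟩ := Finset.mem_map.1 ha
    have hb' := Finset.mem_sdiff.1 (hB hb)
    by_contra hn
    exact hb'.2 (Finset.mem_biUnion.2 ⟨y, hy, Finset.mem_filter.2 ⟨hb'.1, hn⟩⟩)
  obtain ⟨f, hf, hft⟩ := (Finset.all_card_le_biUnion_card_iff_exists_injective t).1 hall
  let g : V → V := fun v => if h : v ∈ K then f ⟨v, h⟩ else v
  have hg : ∀ v (h : v ∈ K), g v = f ⟨v, h⟩ := fun v h => dif_pos h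
  have hmaps : ∀ v ∈ K, g v ∈ K' := fun v h => by
    rw [hg v h]; exact (Finset.mem_filter.1 (hft ⟨v, h⟩)).1
  have hinj : Set.InjOn g (K : Set V) := by
    intro x hx y hy hxy
    rw [hg x hx, hg y hy] at hxy
    exact congrArg Subtype.val (hf hxy)
  refine ⟨g, ⟨fun v hv => hmaps v hv, hinj, ?_⟩, ?_⟩
  · exact Finset.surjOn_of_injOn_of_card_le g (fun v hv => hmaps v hv) hinj (by omega)
  · intro v hv
    rw [hg v hv]
    exact (Finset.mem_filter.1 (hft ⟨v, hv⟩)).2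
end

section
/- Let k ≥ 2 be an integer and let γ, d, ε be nonnegative reals. Let 𝒢 be a graph on ℓ vertices such that d(x) + d(y) ≥ 2(1 − 1/(k−1) + γ − d − 2ε)·ℓ for all nonadjacent x, y ∈ V(𝒢), and let Φ be a maximal k-clique-cover of 𝒢. If K₁, …, K_p are p ≥ 2 distinct cliques in Φ_i for some i with 1 ≤ i ≤ k − 1, then Σ_{v ∈ V(K₁) ∪ … ∪ V(K_p)} d_𝒢(v) ≥ p·i·(1 − 1/(k−1) + γ − d − 2ε)·ℓ. -/
/-- No clique of order `i + 1` lies inside the union of two order-`i` cliques of a maximal cover. -/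
theorem no_bigger_clique {V : Type*} [DecidableEq V] (G : SimpleGraph V) (k : ℕ)
    (Φ : Finset (Finset V)) (hΦ : IsMaxCliqueCover G k Φ) (i : ℕ) (hik : i + 1 ≤ k)
    (A B : Finset V) (hA : A ∈ Φ) (hB : B ∈ Φ) (hAc : A.card = i) (hBc : B.card = i)
    (C : Finset V) (hCs : C ⊆ A ∪ B) (hC : G.IsClique (C : Set V)) (hCc : C.card = i + 1) :
    False := by
  obtain ⟨⟨h1, h2, h3⟩, hmax⟩ := hΦ
  have hCne : C.Nonempty := by rw [← Finset.card_pos]; omega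
  have hdisj : ∀ S ∈ Φ, S ≠ A → S ≠ B → Disjoint S C := by
    intro S hS hSA hSB
    refine Finset.disjoint_of_subset_right hCs ?_
    exact Finset.disjoint_union_right.2 ⟨h2 hS hA hSA, h2 hS hB hSB⟩
  have hCA : C ≠ A := by rintro rfl; omega
  have hCB : C ≠ B := by rintro rfl; omega
  have hCΦ : C ∉ Φ := by
    intro h
    exact hCne.ne_empty (disjoint_self.1 (hdisj C h hCA hCB))
  have hAi : (A \ C).card ≤ i := hAc ▸ Finset.card_le_card Finset.sdiff_subset
  have hBi : (B \ C).card ≤ i := hBc ▸ Finset.card_le_card Finset.sdiff_subset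
  set Ψ : Finset (Finset V) := insert C (Φ.filter (fun S => S ≠ A ∧ S ≠ B) ∪
    ({A \ C, B \ C} : Finset (Finset V)).filter (fun S => S.Nonempty)) with hΨ
  have hmem : ∀ S, S ∈ Ψ ↔ S = C ∨ (S ∈ Φ ∧ S ≠ A ∧ S ≠ B) ∨
      ((S = A \ C ∨ S = B \ C) ∧ S.Nonempty) := by
    intro S; simp [hΨ]
  have hcov : IsCliqueCover G k Ψ := by
    refine ⟨?_, ?_, ?_⟩
    · intro S hS
      rcases (hmem S).1 hS with rfl | ⟨hS, -⟩ | ⟨rfl | rfl, hn⟩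
      · exact ⟨hC, by omega, by omega⟩
      · exact h1 S hS
      · exact ⟨(h1 A hA).1.subset (by simp), Finset.card_pos.2 hn, by omega⟩
      · exact ⟨(h1 B hB).1.subset (by simp), Finset.card_pos.2 hn, by omega⟩
    · have dA : ∀ S ∈ Φ, S ≠ A → Disjoint S (A \ C) := fun S hS h =>
        Finset.disjoint_of_subset_right Finset.sdiff_subset (h2 hS hA h)
      have dB : ∀ S ∈ Φ, S ≠ B → Disjoint S (B \ C) := fun S hS h =>
        Finset.disjoint_of_subset_right Finset.sdiff_subset (h2 hS hB h)
      have dCA : Disjoint C (A \ C) := Finset.disjoint_sdiff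
      have dCB : Disjoint C (B \ C) := Finset.disjoint_sdiff
      have dAB : A ≠ B → Disjoint (A \ C) (B \ C) := fun h =>
        Finset.disjoint_of_subset_left Finset.sdiff_subset (dB A hA h)
      intro S hS T hT hne
      rcases (hmem S).1 hS with rfl | ⟨hS1, hSA, hSB⟩ | ⟨rfl | rfl, hn⟩ <;>
      rcases (hmem T).1 hT with rfl | ⟨hT1, hTA, hTB⟩ | ⟨rfl | rfl, hn'⟩
      · exact absurd rfl hne
      · exact (hdisj T hT1 hTA hTB).symm
      · exact dCA
      · exact dCB
      · exact hdisj S hS1 hSA hSB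
      · exact h2 hS1 hT1 hne
      · exact dA S hS1 hSA
      · exact dB S hS1 hSB
      · exact dCA.symm
      · exact (dA T hT1 hTA).symm
      · exact absurd rfl hne
      · exact dAB (by rintro rfl; exact hne rfl)
      · exact dCB.symm
      · exact (dB T hT1 hTB).symm
      · exact (dAB (by rintro rfl; exact hne rfl)).symm
      · exact absurd rfl hne
    · intro v
      by_cases hvC : v ∈ C
      · exact ⟨C, (hmem C).2 (Or.inl rfl), hvC⟩
      obtain ⟨S, hS, hv⟩ := h3 v
      by_cases hSA : S = A
      · subst hSA
        have hv' : v ∈ S \ C := Finset.mem_sdiff.2 ⟨hv, hvC⟩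
        exact ⟨_, (hmem _).2 (Or.inr (Or.inr ⟨Or.inl rfl, v, hv'⟩)), hv'⟩
      by_cases hSB : S = B
      · subst hSB
        have hv' : v ∈ S \ C := Finset.mem_sdiff.2 ⟨hv, hvC⟩
        exact ⟨_, (hmem _).2 (Or.inr (Or.inr ⟨Or.inr rfl, v, hv'⟩)), hv'⟩
      exact ⟨S, (hmem _).2 (Or.inr (Or.inl ⟨hS, hSA, hSB⟩)), hv⟩
  have key := hmax Ψ hcov (i + 1) (by omega) hik (by
    intro m hm _
    unfold coverVec
    congr 1
    ext S
    simp only [Finset.mem_filter, hmem]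
    constructor
    · rintro ⟨rfl | ⟨hS, -⟩ | ⟨rfl | rfl, hn⟩, hc⟩
      · omega
      · exact ⟨hS, hc⟩
      · omega
      · omega
    · rintro ⟨hS, hc⟩
      refine ⟨Or.inr (Or.inl ⟨hS, ?_, ?_⟩), hc⟩ <;> rintro rfl <;> omega)
  have hins : Ψ.filter (fun S => S.card = i + 1) =
      insert C (Φ.filter (fun S => S.card = i + 1)) := by
    ext S
    simp only [Finset.mem_filter, Finset.mem_insert, hmem]
    constructor
    · rintro ⟨rfl | ⟨hS, -⟩ | ⟨rfl | rfl, hn⟩, hc⟩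
      · exact Or.inl rfl
      · exact Or.inr ⟨hS, hc⟩
      · omega
      · omega
    · rintro (rfl | ⟨hS, hc⟩)
      · exact ⟨Or.inl rfl, hCc⟩
      refine ⟨Or.inr (Or.inl ⟨hS, ?_, ?_⟩), hc⟩ <;> rintro rfl <;> omega
  unfold coverVec at key
  rw [hins, Finset.card_insert_of_notMem (by simp [hCΦ])] at key
  omega

/-- Two order-`i` cliques in a maximal cover admit a perfect matching of non-adjacent pairs. -/
theorem pair_bound {V : Type*} [Fintype V] [DecidableEq V]
    (G : SimpleGraph V) [DecidableRel G.Adj] (k : ℕ) (c : ℝ)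
    (hOre : ∀ x y : V, x ≠ y → ¬ G.Adj x y → 2 * c ≤ (G.degree x : ℝ) + (G.degree y : ℝ))
    (Φ : Finset (Finset V)) (hΦ : IsMaxCliqueCover G k Φ) (i : ℕ) (hik : i + 1 ≤ k)
    (A B : Finset V) (hA : A ∈ Φ) (hB : B ∈ Φ) (hAB : A ≠ B)
    (hAc : A.card = i) (hBc : B.card = i) :
    2 * (i * c) ≤ ∑ v ∈ A, (G.degree v : ℝ) + ∑ v ∈ B, (G.degree v : ℝ) := by
  have hdis : Disjoint A B := hΦ.1.2.1 hA hB hAB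
  have hcA := (hΦ.1.1 A hA).1
  have hcB := (hΦ.1.1 B hB).1
  obtain ⟨f, hf, hfm⟩ := (Finset.all_card_le_biUnion_card_iff_exists_injective
    (fun a : A => B.filter (fun b => ¬ G.Adj a b))).1 (by
    intro S
    by_contra! hlt
    set N := S.biUnion (fun a : A => B.filter (fun b => ¬ G.Adj a b)) with hN
    have hNB : N ⊆ B := by
      intro b hb
      obtain ⟨a, _, hb⟩ := Finset.mem_biUnion.1 hb
      exact (Finset.mem_filter.1 hb).1
    set S' : Finset V := S.map (Function.Embedding.subtype _) with hS'
    have hSA : S' ⊆ A := by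
      intro a ha
      obtain ⟨x, _, rfl⟩ := Finset.mem_map.1 ha
      exact x.2
    have hScard : S'.card = S.card := Finset.card_map _
    have hadj : ∀ a ∈ S', ∀ b ∈ B \ N, G.Adj a b := by
      intro a ha b hb
      obtain ⟨x, hx, rfl⟩ := Finset.mem_map.1 ha
      obtain ⟨hb, hbN⟩ := Finset.mem_sdiff.1 hb
      by_contra h
      exact hbN (Finset.mem_biUnion.2 ⟨x, hx, Finset.mem_filter.2 ⟨hb, h⟩⟩)
    have hD : Disjoint S' (B \ N) :=
      Finset.disjoint_of_subset_left hSA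
        (Finset.disjoint_of_subset_right Finset.sdiff_subset hdis)
    have hcard : i + 1 ≤ (S' ∪ (B \ N)).card := by
      rw [Finset.card_union_of_disjoint hD, Finset.card_sdiff_of_subset hNB, hBc, hScard]
      have := Finset.card_le_card hNB
      omega
    obtain ⟨C, hCs, hCc⟩ := Finset.exists_subset_card_eq hcard
    refine no_bigger_clique G k Φ hΦ i hik A B hA hB hAc hBc C
      (hCs.trans (Finset.union_subset_union hSA Finset.sdiff_subset)) ?_ hCc
    intro x hx y hy hxy
    rcases Finset.mem_union.1 (hCs hx) with hx | hx <;>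
    rcases Finset.mem_union.1 (hCs hy) with hy | hy
    · exact hcA (hSA hx) (hSA hy) hxy
    · exact hadj x hx y hy
    · exact (hadj y hy x hx).symm
    · exact hcB (Finset.sdiff_subset hx) (Finset.sdiff_subset hy) hxy)
  have himg : Finset.univ.image f = B := by
    apply Finset.eq_of_subset_of_card_le
    · intro b hb
      obtain ⟨a, _, rfl⟩ := Finset.mem_image.1 hb
      exact (Finset.mem_filter.1 (hfm a)).1
    · rw [Finset.card_image_of_injective _ hf]
      simp [hAc, hBc]
  have hsB : ∑ v ∈ B, (G.degree v : ℝ) = ∑ a : A, (G.degree (f a) : ℝ) := by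
    rw [← himg, Finset.sum_image (fun a _ b _ h => hf h)]
  have hsA : ∑ v ∈ A, (G.degree v : ℝ) = ∑ a : A, (G.degree (a : V) : ℝ) :=
    (Finset.sum_coe_sort A (fun v => (G.degree v : ℝ))).symm
  rw [hsA, hsB, ← Finset.sum_add_distrib]
  have : ∑ _a : A, 2 * c ≤ ∑ a : A, ((G.degree (a : V) : ℝ) + (G.degree (f a) : ℝ)) := by
    refine Finset.sum_le_sum fun a _ => ?_
    obtain ⟨hb, hn⟩ := Finset.mem_filter.1 (hfm a)
    exact hOre _ _ (fun h => Finset.disjoint_left.1 hdis a.2 (h ▸ hb)) hn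
  simp only [Finset.sum_const, Finset.card_univ, Fintype.card_coe, hAc, nsmul_eq_mul] at this
  linarith

/-- **Proposition.** Under the Ore-type condition, if `K₁, …, K_p` are `p ≥ 2` distinct
cliques of order `i ∈ [1, k-1]` in a maximal `k`-clique-cover `Φ` of `𝒢`, then
`Σ_{v ∈ V(K₁) ∪ … ∪ V(K_p)} d(v) ≥ p·i·(1 - 1/(k-1) + γ - d - 2ε)·ℓ`. -/
theorem degree_sum_cliques_lower_bound {V : Type*} [Fintype V] [DecidableEq V]
    (G : SimpleGraph V) [DecidableRel G.Adj]
    (k : ℕ) (hk : 2 ≤ k) (γ d ε : ℝ) (hγ : 0 ≤ γ) (hd : 0 ≤ d) (hε : 0 ≤ ε)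
    (hOre : ∀ x y : V, x ≠ y → ¬ G.Adj x y →
      2 * (1 - 1 / ((k : ℝ) - 1) + γ - d - 2 * ε) * (Fintype.card V) ≤
        (G.degree x : ℝ) + (G.degree y : ℝ))
    (Φ : Finset (Finset V)) (hΦ : IsMaxCliqueCover G k Φ)
    (i : ℕ) (hi1 : 1 ≤ i) (hik : i ≤ k - 1)
    (p : ℕ) (hp : 2 ≤ p) (K : Fin p → Finset V) (hKinj : Function.Injective K)
    (hKmem : ∀ j, K j ∈ Φ) (hKcard : ∀ j, (K j).card = i) :
    (p : ℝ) * i * (1 - 1 / ((k : ℝ) - 1) + γ - d - 2 * ε) * (Fintype.card V) ≤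
      ∑ v ∈ Finset.univ.biUnion (fun j => K j), (G.degree v : ℝ) := by
  rw [Finset.sum_biUnion (fun a _ b _ h => hΦ.1.2.1 (hKmem a) (hKmem b) (fun e => h (hKinj e)))]
  set c : ℝ := (1 - 1 / ((k : ℝ) - 1) + γ - d - 2 * ε) * (Fintype.card V) with hc
  set D : Fin p → ℝ := fun j => ∑ v ∈ K j, (G.degree v : ℝ) with hD
  obtain ⟨n, rfl⟩ : ∃ n, p = n + 2 := ⟨p - 2, by omega⟩
  have hpair : ∀ j, 2 * (i * c) ≤ D j + D (finRotate _ j) := by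
    intro j
    refine pair_bound G k c (fun x y h1 h2 => ?_) Φ hΦ i (by omega) _ _ (hKmem _) (hKmem _)
      (fun e => ?_) (hKcard _) (hKcard _)
    · have := hOre x y h1 h2
      rw [hc]; linarith
    · have h := hKinj e
      rw [finRotate_apply] at h
      simp at h
  have hsum := Finset.sum_le_sum fun j (_ : j ∈ (Finset.univ : Finset (Fin (n + 2)))) => hpair j
  rw [Finset.sum_add_distrib, Equiv.sum_comp (finRotate (n + 2)) D] at hsum
  simp only [Finset.sum_const, Finset.card_univ, Fintype.card_fin, nsmul_eq_mul] at hsum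
  have e : ((n + 2 : ℕ) : ℝ) * i * (1 - 1 / ((k : ℝ) - 1) + γ - d - 2 * ε) * (Fintype.card V)
      = ((n + 2 : ℕ) : ℝ) * (i * c) := by rw [hc]; ring
  rw [e]
  linarith
end

section
/- Let k ≥ 2 be an integer and let γ, d, ε be nonnegative reals. Let 𝒢 be a graph on ℓ vertices such that d(x) + d(y) ≥ 2(1 − 1/(k−1) + γ − d − 2ε)·ℓ for all nonadjacent x, y ∈ V(𝒢), let Φ be a maximal k-clique-cover of 𝒢, and set φ_i = |Φ_i|/ℓ for each i ∈ [1,k]. Let i₀ = min{ i ∈ [1,k] : |Φ_i| ≥ k }, and assume i₀ < k and Φ_i = ∅ for all i < i₀. Then φ_k ≥ Σ_{i=2}^{k−i₀} (i−1)·φ_{k−i} + (k−1)γ − (k−1)(d + 2ε). -/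
open Classical in
lemma coverVec_eq_sum {V : Type*} (Φ : Finset (Finset V)) (i : ℕ) :
    coverVec Φ i = ∑ S ∈ Φ, if S.card = i then 1 else 0 := by
  unfold coverVec
  rw [Finset.card_filter]

open Classical in
lemma exchange {V : Type*} {G : SimpleGraph V} {k : ℕ} {Φ : Finset (Finset V)}
    (hΦ : IsMaxCliqueCover G k Φ) (R A : Finset (Finset V)) (hR : R ⊆ Φ)
    (hA : ∀ S ∈ A, G.IsClique (S : Set V) ∧ S.card ≤ k)
    (hdis : (A : Set (Finset V)).Pairwise fun S T => Disjoint S T)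
    (hun : ∀ v, (∃ S ∈ A, v ∈ S) ↔ ∃ S ∈ R, v ∈ S)
    (j : ℕ) (hj : 1 ≤ j) (hjk : j ≤ k)
    (heq : ∀ i, j < i → i ≤ k → coverVec A i = coverVec R i) :
    coverVec A j ≤ coverVec R j := by
  obtain ⟨⟨h1, h2, h3⟩, hmax⟩ := hΦ
  have key : ∀ S ∈ Φ \ R, ∀ T ∈ A, Disjoint S T := by
    intro S hS T hT
    rw [Finset.mem_sdiff] at hS
    rw [Finset.disjoint_left]
    intro v hvS hvT
    obtain ⟨U, hU, hvU⟩ := (hun v).1 ⟨T, hT, hvT⟩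
    have hne : S ≠ U := fun h => hS.2 (h ▸ hU)
    exact Finset.disjoint_left.1 (h2 hS.1 (hR hU) hne) hvS hvU
  have hdisj : Disjoint (Φ \ R) (A.erase ∅) := by
    rw [Finset.disjoint_left]
    intro S hS hSA
    rw [Finset.mem_erase] at hSA
    exact hSA.1 (by simpa using key S hS S hSA.2)
  have hcv : ∀ i, 1 ≤ i → coverVec ((Φ \ R) ∪ A.erase ∅) i + coverVec R i
      = coverVec Φ i + coverVec A i := by
    intro i hi
    have e1 : coverVec (A.erase ∅) i = coverVec A i := by
      simp only [coverVec_eq_sum]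
      apply Finset.sum_erase
      rw [Finset.card_empty, if_neg (by omega)]
    rw [← e1]
    simp only [coverVec_eq_sum]
    rw [Finset.sum_union hdisj, ← Finset.sum_sdiff hR]
    omega
  have hcov : IsCliqueCover G k ((Φ \ R) ∪ A.erase ∅) := by
    refine ⟨?_, ?_, ?_⟩
    · intro S hS
      rw [Finset.mem_union] at hS
      rcases hS with hS | hS
      · exact h1 S (Finset.mem_sdiff.1 hS).1
      · rw [Finset.mem_erase] at hS
        exact ⟨(hA S hS.2).1, Finset.card_pos.2 (Finset.nonempty_iff_ne_empty.2 hS.1), (hA S hS.2).2⟩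
    · intro S hS T hT hne
      rw [Finset.mem_coe, Finset.mem_union] at hS hT
      rcases hS with hS | hS <;> rcases hT with hT | hT
      · exact h2 (Finset.mem_sdiff.1 hS).1 (Finset.mem_sdiff.1 hT).1 hne
      · exact key S hS T (Finset.mem_of_mem_erase hT)
      · exact (key T hT S (Finset.mem_of_mem_erase hS)).symm
      · exact hdis (Finset.mem_of_mem_erase hS) (Finset.mem_of_mem_erase hT) hne
    · intro v
      obtain ⟨S, hS, hv⟩ := h3 v
      by_cases hSR : S ∈ R
      · obtain ⟨T, hT, hvT⟩ := (hun v).2 ⟨S, hSR, hv⟩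
        refine ⟨T, Finset.mem_union_right _ (Finset.mem_erase.2 ⟨?_, hT⟩), hvT⟩
        rintro rfl
        simp at hvT
      · exact ⟨S, Finset.mem_union_left _ (Finset.mem_sdiff.2 ⟨hS, hSR⟩), hv⟩
  have := hmax _ hcov j hj hjk (fun i hi hik => by
    have a := hcv i (by omega)
    have b := heq i hi hik
    omega)
  have a := hcv j hj
  omega

open Classical in
lemma swap2 {V : Type*} {G : SimpleGraph V} {k : ℕ} {Φ : Finset (Finset V)}
    (hΦ : IsMaxCliqueCover G k Φ) (P Q P' Q' T' : Finset V) (hP : P ∈ Φ) (hQ : Q ∈ Φ)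
    (hne : P ≠ Q) (hP' : G.IsClique (P' : Set V)) (hQ' : G.IsClique (Q' : Set V))
    (hT' : G.IsClique (T' : Set V))
    (d1 : Disjoint P' Q') (d2 : Disjoint P' T') (d3 : Disjoint Q' T')
    (hu : P' ∪ (Q' ∪ T') = P ∪ Q)
    (h1 : P.card < P'.card) (h2 : Q.card < P'.card) (h3 : P'.card ≤ k) : False := by
  have hc : P'.card + (Q'.card + T'.card) = P.card + Q.card := by
    rw [← Finset.card_union_of_disjoint d3, ← Finset.card_union_of_disjoint
      (Finset.disjoint_union_right.2 ⟨d1, d2⟩), hu, Finset.card_union_of_disjoint]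
    exact hΦ.1.2.1 hP hQ hne
  have hne' : P' ∉ ({Q', T'} : Finset (Finset V)) := by
    simp only [Finset.mem_insert, Finset.mem_singleton]
    rintro (h | h)
    · rw [← h] at hc
      omega
    · rw [← h] at hc
      omega
  have s1 : ∀ i, P'.card ≤ i → coverVec {P, Q} i = 0 := by
    intro i hi
    rw [coverVec_eq_sum, Finset.sum_pair hne, if_neg (by omega), if_neg (by omega)]
  have s2 : ∀ i, P'.card ≤ i → coverVec {P', Q', T'} i = if P'.card = i then 1 else 0 := by
    intro i hi
    rw [coverVec_eq_sum, Finset.sum_insert hne', Finset.sum_eq_zero, add_zero]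
    intro S hS
    simp only [Finset.mem_insert, Finset.mem_singleton] at hS
    rw [if_neg]
    rcases hS with rfl | rfl <;> omega
  have := exchange hΦ {P, Q} {P', Q', T'} (by
      intro S hS
      simp only [Finset.mem_insert, Finset.mem_singleton] at hS
      rcases hS with rfl | rfl <;> assumption) (by
      intro S hS
      simp only [Finset.mem_insert, Finset.mem_singleton] at hS
      rcases hS with rfl | rfl | rfl
      · exact ⟨hP', h3⟩
      · exact ⟨hQ', by omega⟩
      · exact ⟨hT', by omega⟩) (by
      intro S hS T hT hST
      simp only [Finset.coe_insert, Finset.coe_singleton, Set.mem_insert_iff,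
        Set.mem_singleton_iff] at hS hT
      rcases hS with h | h | h <;> rcases hT with h' | h' | h' <;>
        first
        | exact absurd (h.trans h'.symm) hST
        | (rw [h, h']; assumption)
        | (rw [h, h']; apply Disjoint.symm; assumption)) (by
      intro v
      have := Finset.ext_iff.1 hu v
      simpa using this) P'.card (by omega) h3 (by
      intro i hi _
      rw [s1 i hi.le, s2 i hi.le, if_neg (by omega)])
  rw [s1 _ le_rfl, s2 _ le_rfl, if_pos rfl] at this
  omega

open Classical in
lemma swap3 {V : Type*} {G : SimpleGraph V} {k a : ℕ} {Φ : Finset (Finset V)}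
    (hΦ : IsMaxCliqueCover G k Φ) (P Q K : Finset V) (hP : P ∈ Φ) (hQ : Q ∈ Φ) (hK : K ∈ Φ)
    (hne : P ≠ Q) (cP : P.card = a) (cQ : Q.card = a) (cK : K.card = k) (hak : a < k)
    (q y : V) (hq : q ∈ K) (hy : y ∈ Q) (hqP : ∀ x ∈ P, G.Adj q x)
    (hyK : ∀ x ∈ K, G.Adj y x) : False := by
  have hPQ := hΦ.1.2.1 hP hQ hne
  have hPK' : P ≠ K := by rintro rfl; omega
  have hQK' : Q ≠ K := by rintro rfl; omega
  have hPK := hΦ.1.2.1 hP hK hPK'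
  have hQK := hΦ.1.2.1 hQ hK hQK'
  have clP := (hΦ.1.1 P hP).1
  have clQ := (hΦ.1.1 Q hQ).1
  have clK := (hΦ.1.1 K hK).1
  have hqP' : q ∉ P := fun h => Finset.disjoint_left.1 hPK h hq
  have hqQ' : q ∉ Q := fun h => Finset.disjoint_left.1 hQK h hq
  have hyK' : y ∉ K := fun h => Finset.disjoint_left.1 hQK hy h
  have hyP' : y ∉ P := fun h => Finset.disjoint_left.1 hPQ h hy
  have hyq : y ≠ q := by rintro rfl; exact hyK' hq
  obtain ⟨P', eP⟩ : ∃ P', P' = insert q P := ⟨_, rfl⟩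
  obtain ⟨Q', eQ⟩ : ∃ Q', Q' = Q.erase y := ⟨_, rfl⟩
  obtain ⟨K', eK⟩ : ∃ K', K' = insert y (K.erase q) := ⟨_, rfl⟩
  have ha : 0 < a := by rw [← cQ]; exact Finset.card_pos.2 ⟨y, hy⟩
  have cP' : P'.card = a + 1 := by rw [eP, Finset.card_insert_of_notMem hqP', cP]
  have cQ' : Q'.card = a - 1 := by rw [eQ, Finset.card_erase_of_mem hy, cQ]
  have cK' : K'.card = k := by
    rw [eK, Finset.card_insert_of_notMem (by simp [hyK']), Finset.card_erase_of_mem hq, cK]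
    omega
  replace hPQ := Finset.disjoint_left.1 hPQ
  replace hPK := Finset.disjoint_left.1 hPK
  replace hQK := Finset.disjoint_left.1 hQK
  have dPQ : Disjoint P' Q' := by
    rw [Finset.disjoint_left, eP, eQ]
    intro v
    simp only [Finset.mem_insert, Finset.mem_erase]
    rintro (rfl | h) ⟨h1, h2⟩
    · exact hqQ' h2
    · exact hPQ h h2
  have dPK : Disjoint P' K' := by
    rw [Finset.disjoint_left, eP, eK]
    intro v
    simp only [Finset.mem_insert, Finset.mem_erase]
    rintro (h | h) (h' | ⟨h1, h2⟩)
    · exact hyq (h'.symm.trans h)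
    · exact h1 h
    · exact hyP' (h' ▸ h)
    · exact hPK h h2
  have dQK : Disjoint Q' K' := by
    rw [Finset.disjoint_left, eQ, eK]
    intro v
    simp only [Finset.mem_insert, Finset.mem_erase]
    rintro ⟨h1, h2⟩ (h | ⟨h3, h4⟩)
    · exact h1 h
    · exact hQK h2 h4
  have clP' : G.IsClique (P' : Set V) := by
    rw [eP, Finset.coe_insert, SimpleGraph.isClique_insert]
    exact ⟨clP, fun b hb _ => hqP b hb⟩
  have clQ' : G.IsClique (Q' : Set V) := by
    apply clQ.subset
    rw [eQ]
    exact_mod_cast Finset.erase_subset _ _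
  have clK' : G.IsClique (K' : Set V) := by
    rw [eK, Finset.coe_insert, SimpleGraph.isClique_insert]
    refine ⟨clK.subset (by exact_mod_cast Finset.erase_subset _ _), fun b hb _ => ?_⟩
    exact hyK b (Finset.mem_of_mem_erase hb)
  have nPQ : P' ≠ Q' := by intro h; rw [h] at cP'; omega
  have nQK : Q' ≠ K' := by intro h; rw [h] at cQ'; omega
  have nPK : P' ≠ K' := by
    intro h
    rw [← h, disjoint_self] at dPK
    rw [dPK] at cP'
    simp at cP'
  have s1 : ∀ i, coverVec {P, Q, K} i = (if a = i then 1 else 0) + ((if a = i then 1 else 0)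
      + (if k = i then 1 else 0)) := by
    intro i
    rw [coverVec_eq_sum, Finset.sum_insert (by simp [hne, hPK']), Finset.sum_pair hQK', cP, cQ, cK]
  have s2 : ∀ i, coverVec {P', Q', K'} i = (if a + 1 = i then 1 else 0)
      + ((if a - 1 = i then 1 else 0) + (if k = i then 1 else 0)) := by
    intro i
    rw [coverVec_eq_sum, Finset.sum_insert (by simp [nPQ, nPK]), Finset.sum_pair nQK,
      cP', cQ', cK']
  have := exchange hΦ {P, Q, K} {P', Q', K'} (by
      intro S hS
      simp only [Finset.mem_insert, Finset.mem_singleton] at hS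
      rcases hS with rfl | rfl | rfl <;> assumption) (by
      intro S hS
      simp only [Finset.mem_insert, Finset.mem_singleton] at hS
      rcases hS with h | h | h <;> rw [h]
      · exact ⟨clP', by omega⟩
      · exact ⟨clQ', by omega⟩
      · exact ⟨clK', by omega⟩) (by
      intro S hS T hT hST
      simp only [Finset.coe_insert, Finset.coe_singleton, Set.mem_insert_iff,
        Set.mem_singleton_iff] at hS hT
      rcases hS with h | h | h <;> rcases hT with h' | h' | h' <;>
        first
        | exact absurd (h.trans h'.symm) hST
        | (rw [h, h']; assumption)
        | (rw [h, h']; apply Disjoint.symm; assumption)) (by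
      intro v
      simp only [Finset.mem_insert, Finset.mem_singleton, exists_eq_or_imp, exists_eq_left,
        eP, eQ, eK, Finset.mem_erase]
      by_cases e1 : v = q
      · subst e1; simp [hq]
      · by_cases e2 : v = y
        · subst e2; simp [hy]
        · simp [e1, e2]) (a + 1) (by omega) (by omega) (by
      intro i hi _
      rw [s1, s2, if_neg (show ¬ (a = i) by omega),
        if_neg (show ¬ (a + 1 = i) by omega), if_neg (show ¬ (a - 1 = i) by omega)])
  rw [s1, s2, if_pos rfl, if_neg (show ¬ (a = a + 1) by omega)] at this
  omega

open Classical in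
lemma pair_matching {V : Type*} {G : SimpleGraph V} {k a : ℕ} {Φ : Finset (Finset V)}
    (hΦ : IsMaxCliqueCover G k Φ) (P Q : Finset V) (hP : P ∈ Φ) (hQ : Q ∈ Φ)
    (hne : P ≠ Q) (cP : P.card = a) (cQ : Q.card = a) (hak : a < k)
    (f : V → ℝ) (D : ℝ) (hf : ∀ x y, x ≠ y → ¬ G.Adj x y → 2 * D ≤ f x + f y) :
    2 * (a * D) ≤ ∑ x ∈ P, f x + ∑ y ∈ Q, f y := by
  have hPQ := hΦ.1.2.1 hP hQ hne
  have clP := (hΦ.1.1 P hP).1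
  have clQ := (hΦ.1.1 Q hQ).1
  have hall : ∀ s : Finset P, s.card ≤
      (s.biUnion fun x : P => Q.filter fun y => ¬ G.Adj x y).card := by
    intro s
    by_contra hlt
    push Not at hlt
    obtain ⟨N, hN⟩ : ∃ N, N = s.biUnion fun x : P => Q.filter fun y => ¬ G.Adj x y := ⟨_, rfl⟩
    rw [← hN] at hlt
    have hNQ : N ⊆ Q := by
      rw [hN]
      intro y hy
      simp only [Finset.mem_biUnion, Finset.mem_filter] at hy
      obtain ⟨_, _, h, _⟩ := hy
      exact h
    obtain ⟨t, hts, htc⟩ := Finset.exists_subset_card_eq (show N.card + 1 ≤ s.card by omega)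
    obtain ⟨B, hB⟩ : ∃ B : Finset V, B = t.map (Function.Embedding.subtype _) := ⟨_, rfl⟩
    have cB : B.card = N.card + 1 := by rw [hB, Finset.card_map, htc]
    have hBP : B ⊆ P := by
      intro v hv
      rw [hB] at hv
      simp only [Finset.mem_map, Function.Embedding.subtype_apply] at hv
      obtain ⟨w, _, rfl⟩ := hv
      exact w.2
    have hadj : ∀ x ∈ B, ∀ y ∈ Q \ N, G.Adj x y := by
      intro x hx y hy
      rw [hB] at hx
      simp only [Finset.mem_map, Function.Embedding.subtype_apply] at hx
      obtain ⟨w, hw, rfl⟩ := hx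
      rw [Finset.mem_sdiff] at hy
      by_contra hna
      apply hy.2
      rw [hN, Finset.mem_biUnion]
      exact ⟨w, hts hw, Finset.mem_filter.2 ⟨hy.1, hna⟩⟩
    have hBQ : Disjoint B (Q \ N) :=
      (hPQ.mono_left hBP).mono_right Finset.sdiff_subset
    have cc : (B ∪ Q \ N).card = a + 1 := by
      rw [Finset.card_union_of_disjoint hBQ, Finset.card_sdiff_of_subset hNQ, cB, cQ]
      have := Finset.card_le_card hNQ
      omega
    refine swap2 hΦ P Q (B ∪ Q \ N) (P \ B) N hP hQ hne ?_ ?_ ?_ ?_ ?_ ?_ ?_ (by omega)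
      (by omega) (by omega)
    · intro x hx y hy hxy
      rw [Finset.mem_coe, Finset.mem_union] at hx hy
      rcases hx with hx | hx <;> rcases hy with hy | hy
      · exact clP (hBP hx) (hBP hy) hxy
      · exact hadj x hx y hy
      · exact (hadj y hy x hx).symm
      · exact clQ (Finset.mem_sdiff.1 hx).1 (Finset.mem_sdiff.1 hy).1 hxy
    · exact clP.subset (by exact_mod_cast Finset.sdiff_subset)
    · exact clQ.subset (by exact_mod_cast hNQ)
    · rw [Finset.disjoint_union_left]
      refine ⟨Finset.disjoint_sdiff, ?_⟩
      exact (hPQ.mono_right Finset.sdiff_subset).symm.mono_right Finset.sdiff_subset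
    · rw [Finset.disjoint_union_left]
      exact ⟨(hPQ.mono_left hBP).mono_right hNQ, Finset.sdiff_disjoint⟩
    · exact (hPQ.mono_left Finset.sdiff_subset).mono_right hNQ
    · ext v
      have h1 := @hBP v
      have h2 := @hNQ v
      simp only [Finset.mem_union, Finset.mem_sdiff]
      tauto
  obtain ⟨g, gi, hg⟩ := (Finset.all_card_le_biUnion_card_iff_exists_injective
    (fun x : P => Q.filter fun y => ¬ G.Adj x y)).1 hall
  have himg : Finset.univ.image g = Q := by
    apply Finset.eq_of_subset_of_card_le
    · intro y hy
      rw [Finset.mem_image] at hy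
      obtain ⟨x, _, rfl⟩ := hy
      exact (Finset.mem_filter.1 (hg x)).1
    · rw [Finset.card_image_of_injective _ gi, Finset.card_univ, Fintype.card_coe]
      omega
  have e1 : ∑ y ∈ Q, f y = ∑ x : P, f (g x) := by
    rw [← himg, Finset.sum_image (fun _ _ _ _ h => gi h)]
  have e2 : ∑ x ∈ P, f x = ∑ x : P, f x := (Finset.sum_coe_sort P f).symm
  rw [e1, e2, ← Finset.sum_add_distrib]
  have : ∑ x : P, 2 * D ≤ ∑ x : P, (f x + f (g x)) := by
    apply Finset.sum_le_sum
    intro x _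
    have := Finset.mem_filter.1 (hg x)
    apply hf _ _ _ this.2
    intro h
    exact Finset.disjoint_left.1 hPQ x.2 (h ▸ this.1)
  rw [Finset.sum_const, Finset.card_univ, Fintype.card_coe, cP, nsmul_eq_mul] at this
  linarith

lemma avg_of_pairs {α : Type*} (S : Finset α) (hS : 2 ≤ S.card) (f : α → ℝ) (c : ℝ)
    (h : ∀ x ∈ S, ∀ y ∈ S, x ≠ y → 2 * c ≤ f x + f y) : S.card * c ≤ ∑ x ∈ S, f x := by
  classical
  by_contra hlt
  push Not at hlt
  obtain ⟨x, hx, hfx⟩ : ∃ x ∈ S, f x < c := by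
    by_contra hno
    push Not at hno
    have := Finset.card_nsmul_le_sum S f c hno
    rw [nsmul_eq_mul] at this
    linarith
  have h1 := Finset.card_nsmul_le_sum (S.erase x) f (2 * c - f x) (fun y hy => by
    have := h x hx y (Finset.mem_of_mem_erase hy) (Finset.ne_of_mem_erase hy).symm
    linarith)
  have h2 := Finset.add_sum_erase S f hx
  rw [nsmul_eq_mul, Finset.card_erase_of_mem hx, Nat.cast_sub (by omega)] at h1
  have h3 : (2 : ℝ) ≤ S.card := by exact_mod_cast hS
  push_cast at h1
  nlinarith [mul_nonneg (sub_nonneg.2 h3) (sub_nonneg.2 hfx.le)]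

open Classical in
lemma big_clique_bound {V : Type*} {G : SimpleGraph V} {k a : ℕ} {Φ : Finset (Finset V)}
    (hΦ : IsMaxCliqueCover G k Φ) (S : Finset (Finset V)) (hS : S ⊆ Φ)
    (hSa : ∀ X ∈ S, X.card = a) (hSk : S.card = k) (ha : 1 ≤ a) (hak : a < k)
    (K : Finset V) (hK : K ∈ Φ) (cK : K.card = k) :
    ∑ X ∈ S, ∑ x ∈ X, (K.filter (G.Adj x)).card ≤ k * (a * (k - 1)) := by
  by_cases hex : ∃ Y ∈ S, ∃ y ∈ Y, ∀ q ∈ K, G.Adj y q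
  · obtain ⟨Y, hY, y, hy, hyK⟩ := hex
    have hother : ∀ X ∈ S.erase Y, ∑ x ∈ X, (K.filter (G.Adj x)).card ≤ k * (a - 1) := by
      intro X hX
      rw [Finset.mem_erase] at hX
      have e : ∑ x ∈ X, (K.filter (G.Adj x)).card = ∑ q ∈ K, (X.filter (G.Adj q)).card := by
        simp only [Finset.card_filter]
        rw [Finset.sum_comm]
        simp only [G.adj_comm]
      rw [e, ← cK, ← smul_eq_mul]
      apply Finset.sum_le_card_nsmul
      intro q hq
      by_contra hlt
      have hsub : X.filter (G.Adj q) = X := by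
        apply Finset.eq_of_subset_of_card_le (Finset.filter_subset _ _)
        rw [hSa X hX.2]
        omega
      refine swap3 hΦ X Y K (hS hX.2) (hS hY) hK hX.1 (hSa X hX.2) (hSa Y hY) cK hak q y hq hy
        ?_ hyK
      intro x hx
      rw [← hsub] at hx
      exact (Finset.mem_filter.1 hx).2
    have h1 := Finset.sum_le_card_nsmul _ _ _ hother
    have h2 : ∑ x ∈ Y, (K.filter (G.Adj x)).card ≤ a * k := by
      rw [← hSa Y hY, ← smul_eq_mul]
      apply Finset.sum_le_card_nsmul
      intro x _
      rw [← cK]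
      exact Finset.card_filter_le _ _
    rw [← Finset.add_sum_erase S _ hY]
    rw [Finset.card_erase_of_mem hY, hSk, smul_eq_mul] at h1
    refine (Nat.add_le_add h2 h1).trans ?_
    obtain ⟨b, rfl⟩ : ∃ b, a = b + 1 := ⟨a - 1, by omega⟩
    obtain ⟨c, rfl⟩ : ∃ c, k = b + 2 + c := ⟨k - (b + 2), by omega⟩
    have e1 : b + 2 + c - 1 = b + 1 + c := by omega
    rw [e1, Nat.add_sub_cancel]
    nlinarith
  · push Not at hex
    rw [← hSk, ← smul_eq_mul (S.card)]
    apply Finset.sum_le_card_nsmul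
    intro X hX
    rw [← hSa X hX, ← smul_eq_mul]
    apply Finset.sum_le_card_nsmul
    intro x hx
    obtain ⟨q, hq, hna⟩ := hex X hX x hx
    have : (K.filter (G.Adj x)).card < K.card := by
      apply Finset.card_lt_card
      rw [Finset.filter_ssubset]
      exact ⟨q, hq, hna⟩
    omega

open Classical in
lemma small_clique_bound {V : Type*} {G : SimpleGraph V} {k a : ℕ} {Φ : Finset (Finset V)}
    (hΦ : IsMaxCliqueCover G k Φ) (X Q : Finset V) (hX : X ∈ Φ) (hQ : Q ∈ Φ)
    (cX : X.card = a) (haQ : a ≤ Q.card) (hQk : Q.card < k) (x : V) (hx : x ∈ X) :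
    (Q.filter (G.Adj x)).card ≤ Q.card - 1 := by
  have : (Q.filter (G.Adj x)).card < Q.card := by
    apply Finset.card_lt_card
    rw [Finset.filter_ssubset]
    by_cases hXQ : X = Q
    · exact ⟨x, hXQ ▸ hx, G.irrefl⟩
    · by_contra hno
      push Not at hno
      have hd := hΦ.1.2.1 hX hQ hXQ
      have hxQ : x ∉ Q := Finset.disjoint_left.1 hd hx
      have cc : (insert x Q).card = Q.card + 1 := Finset.card_insert_of_notMem hxQ
      refine swap2 hΦ X Q (insert x Q) (X.erase x) ∅ hX hQ hXQ ?_ ?_ ?_ ?_ ?_ ?_ ?_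
        (by omega) (by omega) (by omega)
      · rw [Finset.coe_insert, SimpleGraph.isClique_insert]
        exact ⟨(hΦ.1.1 Q hQ).1, fun b hb _ => hno b hb⟩
      · exact (hΦ.1.1 X hX).1.subset (by exact_mod_cast Finset.erase_subset _ _)
      · simp
      · rw [Finset.disjoint_insert_left]
        exact ⟨by simp, hd.symm.mono_right (Finset.erase_subset _ _)⟩
      · simp
      · simp
      · ext v
        by_cases e : v = x
        · subst e; simp [hx]
        · simp [e, or_comm]
  omega

open Classical in
lemma cover_sum {V : Type*} [Fintype V] {G : SimpleGraph V} {k : ℕ} {Φ : Finset (Finset V)}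
    (hΦ : IsCliqueCover G k Φ) (p : V → Prop) :
    (Finset.univ.filter p).card = ∑ Q ∈ Φ, (Q.filter p).card := by
  rw [← Finset.card_biUnion]
  · congr 1
    ext v
    simp only [Finset.mem_filter, Finset.mem_univ, true_and, Finset.mem_biUnion]
    constructor
    · intro h
      obtain ⟨S, hS, hv⟩ := hΦ.2.2 v
      exact ⟨S, hS, hv, h⟩
    · rintro ⟨_, _, _, h⟩
      exact h
  · intro S hS T hT hne
    exact (hΦ.2.1 hS hT hne).mono (Finset.filter_subset _ _) (Finset.filter_subset _ _)

open Classical in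
lemma coverVec_weighted {V : Type*} (Φ : Finset (Finset V)) (k a : ℕ)
    (hΦ : ∀ Q ∈ Φ, a ≤ Q.card ∧ Q.card ≤ k) (hak : a < k) :
    (coverVec Φ k : ℝ) - ∑ i ∈ Finset.Icc 2 (k - a), ((i : ℝ) - 1) * (coverVec Φ (k - i) : ℝ)
      = ∑ Q ∈ Φ, ((Q.card : ℝ) - ((k : ℝ) - 1)) := by
  simp only [coverVec_eq_sum]
  push_cast
  simp only [Finset.mul_sum]
  rw [Finset.sum_comm, ← Finset.sum_sub_distrib]
  apply Finset.sum_congr rfl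
  intro Q hQ
  obtain ⟨h1, h2⟩ := hΦ Q hQ
  by_cases hc : Q.card + 2 ≤ k
  · rw [if_neg (by omega), Finset.sum_eq_single (k - Q.card)]
    · rw [if_pos (by omega), Nat.cast_sub h2]
      ring
    · intro i hi hne
      rw [Finset.mem_Icc] at hi
      rw [if_neg (by omega), mul_zero]
    · intro h
      exact absurd (Finset.mem_Icc.2 ⟨by omega, by omega⟩) h
  · rw [Finset.sum_eq_zero]
    · by_cases hk : Q.card = k
      · rw [if_pos hk, hk]; ring
      · rw [if_neg hk]
        have : k = Q.card + 1 := by omega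
        rw [this]; push_cast; ring
    · intro i hi
      rw [Finset.mem_Icc] at hi
      rw [if_neg (by omega), mul_zero]

/-- **Proposition.** With `φ_i = |Φ_i|/ℓ`, `i₀ = min{i ∈ [1,k] : |Φ_i| ≥ k}`, `i₀ < k`,
and `Φ_i = ∅` for `i < i₀`, the Ore-type condition implies
`φ_k ≥ Σ_{i=2}^{k-i₀} (i-1) φ_{k-i} + (k-1)γ - (k-1)(d+2ε)`. -/
theorem phi_k_lower_bound {V : Type*} [Fintype V]
    (G : SimpleGraph V) [DecidableRel G.Adj]
    (k : ℕ) (hk : 2 ≤ k) (γ d ε : ℝ) (hγ : 0 ≤ γ) (hd : 0 ≤ d) (hε : 0 ≤ ε)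
    (hOre : ∀ x y : V, x ≠ y → ¬ G.Adj x y →
      2 * (1 - 1 / ((k : ℝ) - 1) + γ - d - 2 * ε) * (Fintype.card V) ≤
        (G.degree x : ℝ) + (G.degree y : ℝ))
    (Φ : Finset (Finset V)) (hΦ : IsMaxCliqueCover G k Φ)
    (i₀ : ℕ) (hi₀1 : 1 ≤ i₀) (hi₀k : i₀ < k)
    (hbig : k ≤ coverVec Φ i₀)
    (hempty : ∀ i, 1 ≤ i → i < i₀ → coverVec Φ i = 0) :
    (∑ i ∈ Finset.Icc 2 (k - i₀),
        ((i : ℝ) - 1) * ((coverVec Φ (k - i) : ℝ) / (Fintype.card V : ℝ)))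
      + ((k : ℝ) - 1) * γ - ((k : ℝ) - 1) * (d + 2 * ε)
    ≤ (coverVec Φ k : ℝ) / (Fintype.card V : ℝ) := by
  classical
  obtain ⟨S, hSsub, hSk⟩ := Finset.exists_subset_card_eq hbig
  have hS : S ⊆ Φ := hSsub.trans (Finset.filter_subset _ _)
  have hSa : ∀ X ∈ S, X.card = i₀ := fun X hX => (Finset.mem_filter.1 (hSsub hX)).2
  have hsz : ∀ Q ∈ Φ, i₀ ≤ Q.card ∧ Q.card ≤ k := by
    intro Q hQ
    obtain ⟨_, h1, h2⟩ := hΦ.1.1 Q hQ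
    refine ⟨?_, h2⟩
    by_contra hlt
    have := hempty Q.card h1 (by omega)
    unfold coverVec at this
    rw [Finset.card_eq_zero] at this
    have hm : Q ∈ Φ.filter fun T => T.card = Q.card := Finset.mem_filter.2 ⟨hQ, rfl⟩
    rw [this] at hm
    simp at hm
  have hl : (∑ Q ∈ Φ, Q.card) = Fintype.card V := by
    have := cover_sum hΦ.1 (fun _ => True)
    simpa using this.symm
  have hlpos : 0 < Fintype.card V := by
    obtain ⟨X, hX⟩ := Finset.card_pos.1 (show 0 < S.card by omega)
    have := Finset.card_le_univ X
    have := hSa X hX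
    omega
  have hub : ∑ X ∈ S, ∑ x ∈ X, G.degree x ≤ ∑ Q ∈ Φ, k * (i₀ * (Q.card - 1)) := by
    have e : ∀ x, G.degree x = ∑ Q ∈ Φ, (Q.filter (G.Adj x)).card := by
      intro x
      have h := cover_sum hΦ.1 (G.Adj x)
      rw [← SimpleGraph.card_neighborFinset_eq_degree, SimpleGraph.neighborFinset_eq_filter]
      convert h
    simp only [e]
    have e2 : ∀ X ∈ S, ∑ x ∈ X, ∑ Q ∈ Φ, (Q.filter (G.Adj x)).card
        = ∑ Q ∈ Φ, ∑ x ∈ X, (Q.filter (G.Adj x)).card := fun X _ => Finset.sum_comm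
    rw [Finset.sum_congr rfl e2, Finset.sum_comm]
    apply Finset.sum_le_sum
    intro Q hQ
    obtain ⟨h1, h2⟩ := hsz Q hQ
    by_cases hc : Q.card = k
    · rw [hc]
      convert big_clique_bound hΦ S hS hSa hSk hi₀1 hi₀k Q hQ hc
      rfl
    · rw [← hSk, ← smul_eq_mul (S.card)]
      apply Finset.sum_le_card_nsmul
      intro X hX
      rw [← hSa X hX, ← smul_eq_mul (X.card)]
      apply Finset.sum_le_card_nsmul
      intro x hx
      convert small_clique_bound hΦ X Q (hS hX) hQ (hSa X hX) h1 (by omega) x hx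
      rfl
  have hlb := avg_of_pairs S (by omega) (fun X => ∑ x ∈ X, (G.degree x : ℝ))
    (i₀ * ((1 - 1 / ((k : ℝ) - 1) + γ - d - 2 * ε) * (Fintype.card V)))
    (fun X hX Y hY hne => pair_matching hΦ X Y (hS hX) (hS hY) hne (hSa X hX) (hSa Y hY) hi₀k
      (fun v => (G.degree v : ℝ)) _ (fun x y hxy hna => by
        have := hOre x y hxy hna
        linarith))
  have hub' : (∑ X ∈ S, ∑ x ∈ X, (G.degree x : ℝ)) ≤
      (k : ℝ) * (i₀ * ∑ Q ∈ Φ, ((Q.card : ℝ) - 1)) := by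
    have h : ((∑ X ∈ S, ∑ x ∈ X, G.degree x : ℕ) : ℝ) ≤
      ((∑ Q ∈ Φ, k * (i₀ * (Q.card - 1)) : ℕ) : ℝ) := by exact_mod_cast hub
    push_cast at h
    refine h.trans (le_of_eq ?_)
    rw [Finset.mul_sum, Finset.mul_sum]
    apply Finset.sum_congr rfl
    intro Q hQ
    rw [Nat.cast_sub (hΦ.1.1 Q hQ).2.1]
    push_cast
    ring
  have hcmp := hlb.trans hub'
  rw [hSk] at hcmp
  have hk0 : (0 : ℝ) < k := by exact_mod_cast (by omega : 0 < k)
  have hi0 : (0 : ℝ) < i₀ := by exact_mod_cast hi₀1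
  have hD := le_of_mul_le_mul_left (le_of_mul_le_mul_left hcmp hk0) hi0
  have hl' : ∑ Q ∈ Φ, (Q.card : ℝ) = (Fintype.card V : ℝ) := by exact_mod_cast hl
  have hw := coverVec_weighted Φ k i₀ hsz hi₀k
  rw [Finset.sum_sub_distrib, hl', Finset.sum_const, nsmul_eq_mul] at hw hD
  have hL : (0 : ℝ) < Fintype.card V := by exact_mod_cast hlpos
  have hk1 : (0 : ℝ) < (k : ℝ) - 1 := by
    have : (2 : ℝ) ≤ k := by exact_mod_cast hk
    linarith
  rw [le_div_iff₀ hL]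
  have e3 : (∑ i ∈ Finset.Icc 2 (k - i₀),
        ((i : ℝ) - 1) * ((coverVec Φ (k - i) : ℝ) / (Fintype.card V : ℝ))) * (Fintype.card V : ℝ)
      = ∑ i ∈ Finset.Icc 2 (k - i₀), ((i : ℝ) - 1) * (coverVec Φ (k - i) : ℝ) := by
    rw [Finset.sum_mul]
    apply Finset.sum_congr rfl
    intro i _
    field_simp
  have h5 := mul_le_mul_of_nonneg_left hD hk1.le
  have e4 : ((k : ℝ) - 1) * ((1 - 1 / ((k : ℝ) - 1) + γ - d - 2 * ε) * (Fintype.card V))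
      = ((k : ℝ) - 1) * (Fintype.card V) - (Fintype.card V)
        + ((k : ℝ) - 1) * (γ - d - 2 * ε) * (Fintype.card V) := by
    field_simp
    ring
  rw [e4] at h5
  rw [sub_mul, add_mul, e3]
  linarith
end

section
/- Let k ≥ 2 be an integer and let γ, d, ε be nonnegative reals. Let 𝒢 be a graph on ℓ vertices such that d(x) + d(y) ≥ 2(1 − 1/(k−1) + γ − d − 2ε)·ℓ for all nonadjacent x, y ∈ V(𝒢), let Φ be a maximal k-clique-cover of 𝒢 with φ_j = |Φ_j|/ℓ, let i₀ = min{ i : |Φ_i| ≥ k }, and assume i₀ < k and Φ_j = ∅ for j < i₀. Define s by the identity φ_k = Σ_{j=2}^{k−i₀} (j−1)·φ_{k−j} + (k−1)γ + s. Fix i with 1 ≤ i ≤ k − i₀, and call a clique K ∈ Φ_{k−i} eligible if K is not over-connected to any clique in Φ_k; for an eligible K let Λ(K) be the set of cliques in Φ_k that are well-connected to K. Then for all eligible K ∈ Φ_{k−i}, with at most one exception, |Λ(K)|/ℓ ≥ (k−1)γ + ((i−1)/(k−1))·s + Σ_{2≤j≤i} (j−1)·φ_{k−j} + (i−1)·Σ_{i<j≤k−i₀}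 φ_{k−j} − (k−i)(d + 2ε). -/
/-- `e(A, B) = Σ_{v ∈ A} |N(v) ∩ B|`. -/
def eBetween {V : Type*} (G : SimpleGraph V) [DecidableRel G.Adj] (A B : Finset V) : ℕ :=
  ∑ v ∈ A, (B.filter fun u => G.Adj v u).card

/-- `K` (of order `i`) is well-connected to `K'` (of order `j`): every vertex of `K` has
exactly `j - 1` neighbours in `K'`. -/
def WellConn {V : Type*} (G : SimpleGraph V) [DecidableRel G.Adj] (K K' : Finset V) : Prop :=
  ∀ v ∈ K, (K'.filter fun u => G.Adj v u).card = K'.card - 1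

/-- `K` is over-connected to `K'`: `e(K, K') ≥ |K|(|K'| - 1)` but `K` is not
well-connected to `K'`. -/
def OverConn {V : Type*} (G : SimpleGraph V) [DecidableRel G.Adj] (K K' : Finset V) : Prop :=
  K.card * (K'.card - 1) ≤ eBetween G K K' ∧ ¬ WellConn G K K'

/-- Exchange argument: a maximal cover admits no clique `C` of order `|B| + 1` inside the union
of two of its cliques `A`, `B`. -/
theorem no_augment {V : Type*} (G : SimpleGraph V) (k : ℕ) (Φ : Finset (Finset V))
    (hΦ : IsMaxCliqueCover G k Φ) (A B C : Finset V) (hA : A ∈ Φ) (hB : B ∈ Φ)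
    (hAB : A ≠ B) (hle : A.card ≤ B.card) (hC : G.IsClique (C : Set V))
    (hsub : ∀ v ∈ C, v ∈ A ∨ v ∈ B) (hcard : C.card = B.card + 1) (hk : B.card + 1 ≤ k) :
    False := by
  classical
  obtain ⟨⟨h1, h2, h3⟩, hmax⟩ := hΦ
  have dAB : Disjoint A B := h2 hA hB hAB
  have dA : ∀ S ∈ Φ, S ≠ A → Disjoint S A := fun S hS h => h2 hS hA h
  have dB : ∀ S ∈ Φ, S ≠ B → Disjoint S B := fun S hS h => h2 hS hB h
  have hCΦ : C ∉ Φ := by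
    intro hCm
    have hCA : C ≠ A := by rintro rfl; omega
    have hCB : C ≠ B := by rintro rfl; omega
    have hne : C.Nonempty := Finset.card_pos.mp (by omega)
    obtain ⟨v, hv⟩ := hne
    rcases hsub v hv with h | h
    · exact Finset.disjoint_left.mp (dA C hCm hCA) hv h
    · exact Finset.disjoint_left.mp (dB C hCm hCB) hv h
  set Ψ : Finset (Finset V) :=
    insert C ((Φ.filter fun S => S ≠ A ∧ S ≠ B) ∪
      (({A \ C, B \ C} : Finset (Finset V)).filter fun S => S.Nonempty)) with hΨ
  have memΨ : ∀ S, S ∈ Ψ ↔ S = C ∨ (S ∈ Φ ∧ S ≠ A ∧ S ≠ B) ∨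
      ((S = A \ C ∨ S = B \ C) ∧ S.Nonempty) := by
    intro S; simp [hΨ]
  have cA : (A \ C).card ≤ A.card := Finset.card_le_card Finset.sdiff_subset
  have cB : (B \ C).card ≤ B.card := Finset.card_le_card Finset.sdiff_subset
  have dC : ∀ S ∈ Φ, S ≠ A → S ≠ B → Disjoint S C := by
    intro S hS hSA hSB
    rw [Finset.disjoint_left]
    intro v hv hvC
    rcases hsub v hvC with h | h
    · exact Finset.disjoint_left.mp (dA S hS hSA) hv h
    · exact Finset.disjoint_left.mp (dB S hS hSB) hv h
  have cover : IsCliqueCover G k Ψ := by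
    refine ⟨?_, ?_, ?_⟩
    · intro S hS
      rw [memΨ] at hS
      rcases hS with rfl | ⟨hS, -, -⟩ | ⟨h, hne⟩
      · exact ⟨hC, by omega, by omega⟩
      · exact h1 S hS
      · have := Finset.card_pos.mpr hne
        rcases h with rfl | rfl
        · refine ⟨(h1 A hA).1.subset ?_, by omega, by omega⟩
          exact_mod_cast Finset.sdiff_subset
        · refine ⟨(h1 B hB).1.subset ?_, by omega, by omega⟩
          exact_mod_cast Finset.sdiff_subset
    · intro S hS T hT hST
      rw [Finset.mem_coe, memΨ] at hS hT
      have eA : Disjoint (A \ C) C := Finset.sdiff_disjoint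
      have eB : Disjoint (B \ C) C := Finset.sdiff_disjoint
      have eAB : Disjoint (A \ C) (B \ C) :=
        dAB.mono Finset.sdiff_subset Finset.sdiff_subset
      have fA : ∀ S ∈ Φ, S ≠ A → Disjoint S (A \ C) :=
        fun S hS h => (dA S hS h).mono_right Finset.sdiff_subset
      have fB : ∀ S ∈ Φ, S ≠ B → Disjoint S (B \ C) :=
        fun S hS h => (dB S hS h).mono_right Finset.sdiff_subset
      rcases hS with rfl | ⟨hS, a1, a2⟩ | ⟨rfl | rfl, hne⟩ <;>
      rcases hT with rfl | ⟨hT, b1, b2⟩ | ⟨rfl | rfl, hne'⟩ <;>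
      first
        | exact absurd rfl hST
        | exact eA
        | exact eA.symm
        | exact eB
        | exact eB.symm
        | exact eAB
        | exact eAB.symm
        | exact h2 hS hT hST
        | exact dC _ hS a1 a2
        | exact (dC _ hT b1 b2).symm
        | exact fA _ hS a1
        | exact fB _ hS a2
        | exact (fA _ hT b1).symm
        | exact (fB _ hT b2).symm
    · intro v
      by_cases hv : v ∈ C
      · exact ⟨C, (memΨ C).2 (Or.inl rfl), hv⟩
      · obtain ⟨S, hS, hvS⟩ := h3 v
        by_cases hSA : S = A
        · subst hSA
          have : v ∈ S \ C := by simp [hv, hvS]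
          exact ⟨S \ C, (memΨ _).2 (Or.inr (Or.inr ⟨Or.inl rfl, ⟨v, this⟩⟩)), this⟩
        · by_cases hSB : S = B
          · subst hSB
            have : v ∈ S \ C := by simp [hv, hvS]
            exact ⟨S \ C, (memΨ _).2 (Or.inr (Or.inr ⟨Or.inr rfl, ⟨v, this⟩⟩)), this⟩
          · exact ⟨S, (memΨ _).2 (Or.inr (Or.inl ⟨hS, hSA, hSB⟩)), hvS⟩
  have key := hmax Ψ cover (B.card + 1) (by omega) hk (by
    intro t ht _
    unfold coverVec
    congr 1
    ext S
    simp only [Finset.mem_filter, memΨ]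
    constructor
    · rintro ⟨rfl | ⟨hS, -, -⟩ | ⟨rfl | rfl, -⟩, hc⟩
      · omega
      · exact ⟨hS, hc⟩
      · omega
      · omega
    · rintro ⟨hS, hc⟩
      refine ⟨Or.inr (Or.inl ⟨hS, ?_, ?_⟩), hc⟩ <;> rintro rfl <;> omega)
  have : (insert C (Φ.filter fun S => S.card = B.card + 1)) ⊆
      Ψ.filter fun S => S.card = B.card + 1 := by
    intro S hS
    simp only [Finset.mem_insert, Finset.mem_filter] at hS
    simp only [Finset.mem_filter, memΨ]
    rcases hS with rfl | ⟨hS, hc⟩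
    · exact ⟨Or.inl rfl, hcard⟩
    · refine ⟨Or.inr (Or.inl ⟨hS, ?_, ?_⟩), hc⟩ <;> rintro rfl <;> omega
  have h5 := Finset.card_le_card this
  rw [Finset.card_insert_of_notMem (by simp [hCΦ])] at h5
  unfold coverVec at key
  omega

/-- A vertex of a clique `A` has a non-neighbour in any at least as large clique `B`
of order less than `k`. -/
theorem nbr_lt {V : Type*} (G : SimpleGraph V) [DecidableRel G.Adj] (k : ℕ)
    (Φ : Finset (Finset V)) (hΦ : IsMaxCliqueCover G k Φ) (A B : Finset V)
    (hA : A ∈ Φ) (hB : B ∈ Φ) (hle : A.card ≤ B.card) (hk : B.card + 1 ≤ k) (v : V)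
    (hv : v ∈ A) : (B.filter fun u => G.Adj v u).card + 1 ≤ B.card := by
  classical
  by_contra hcon
  have hfull : B.filter (fun u => G.Adj v u) = B := by
    apply Finset.eq_of_subset_of_card_le (Finset.filter_subset _ _)
    omega
  have hadj : ∀ u ∈ B, G.Adj v u := by
    intro u hu
    rw [← hfull] at hu
    exact (Finset.mem_filter.mp hu).2
  have hvB : v ∉ B := fun h => G.loopless.irrefl v (hadj v h)
  have hne : A ≠ B := by rintro rfl; exact hvB hv
  refine no_augment G k Φ hΦ A B (insert v B) hA hB hne hle ?_ ?_ ?_ hk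
  · rw [Finset.coe_insert, SimpleGraph.isClique_insert]
    exact ⟨(hΦ.1.1 B hB).1, fun b hb _ => hadj b hb⟩
  · intro w hw
    rcases Finset.mem_insert.mp hw with rfl | h
    · exact Or.inl hv
    · exact Or.inr h
  · exact Finset.card_insert_of_notMem hvB

theorem eBetween_comm' {V : Type*} (G : SimpleGraph V) [DecidableRel G.Adj] (A B : Finset V) :
    eBetween G A B = eBetween G B A := by
  unfold eBetween
  simp only [Finset.card_filter]
  rw [Finset.sum_comm]
  simp only [G.adj_comm]

theorem eBetween_le {V : Type*} (G : SimpleGraph V) [DecidableRel G.Adj] (k : ℕ)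
    (Φ : Finset (Finset V)) (hΦ : IsMaxCliqueCover G k Φ) (A B : Finset V)
    (hA : A ∈ Φ) (hB : B ∈ Φ) (hle : A.card ≤ B.card) (hk : B.card + 1 ≤ k) :
    eBetween G A B ≤ A.card * (B.card - 1) := by
  unfold eBetween
  apply Finset.sum_le_card_nsmul
  intro v hv
  have := nbr_lt G k Φ hΦ A B hA hB hle hk v hv
  omega

/-- Two distinct cliques of the same order `< k` in a maximal cover admit a perfect matching of
non-adjacent pairs. -/
theorem exists_matching {V : Type*} (G : SimpleGraph V) [DecidableRel G.Adj] (k : ℕ)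
    (Φ : Finset (Finset V)) (hΦ : IsMaxCliqueCover G k Φ) (A B : Finset V)
    (hA : A ∈ Φ) (hB : B ∈ Φ) (hAB : A ≠ B) (heq : A.card = B.card) (hk : B.card + 1 ≤ k) :
    ∃ f : A → V, Function.Injective f ∧ ∀ a, f a ∈ B ∧ ¬ G.Adj a (f a) := by
  classical
  have hall := (Finset.all_card_le_biUnion_card_iff_exists_injective
    (fun a : A => B.filter fun u => ¬ G.Adj a u)).1 ?_
  · obtain ⟨f, hf, hf'⟩ := hall
    exact ⟨f, hf, fun a => by simpa using hf' a⟩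
  · intro S
    by_contra hcon
    push Not at hcon
    set N := S.biUnion fun a : A => B.filter fun u => ¬ G.Adj a u with hN
    have hNB : N ⊆ B := by
      intro u hu
      simp only [hN, Finset.mem_biUnion, Finset.mem_filter] at hu
      obtain ⟨_, _, h, _⟩ := hu
      exact h
    set T : Finset V := S.map (Function.Embedding.subtype _) with hT
    have hTA : T ⊆ A := by
      intro u hu
      simp only [hT, Finset.mem_map] at hu
      obtain ⟨a, _, rfl⟩ := hu
      exact a.2
    have hTc : T.card = S.card := Finset.card_map _
    have dAB : Disjoint A B := hΦ.1.2.1 hA hB hAB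
    have hd : Disjoint T (B \ N) := dAB.mono hTA Finset.sdiff_subset
    have hadj : ∀ a ∈ T, ∀ b ∈ B \ N, G.Adj a b := by
      intro a ha b hb
      simp only [hT, Finset.mem_map] at ha
      obtain ⟨a, haS, rfl⟩ := ha
      by_contra hn
      rw [Finset.mem_sdiff] at hb
      apply hb.2
      simp only [hN, Finset.mem_biUnion, Finset.mem_filter]
      exact ⟨a, haS, hb.1, hn⟩
    have hcl : G.IsClique ((T ∪ (B \ N) : Finset V) : Set V) := by
      intro x hx y hy hxy
      rw [Finset.mem_coe, Finset.mem_union] at hx hy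
      rcases hx with hx | hx <;> rcases hy with hy | hy
      · exact (hΦ.1.1 A hA).1 (hTA hx) (hTA hy) hxy
      · exact hadj x hx y hy
      · exact (hadj y hy x hx).symm
      · exact (hΦ.1.1 B hB).1 (Finset.sdiff_subset hx) (Finset.sdiff_subset hy) hxy
    have hNc := Finset.card_le_card hNB
    have hbig : B.card + 1 ≤ (T ∪ (B \ N)).card := by
      rw [Finset.card_union_of_disjoint hd, Finset.card_sdiff_of_subset hNB]
      omega
    obtain ⟨C, hCsub, hCc⟩ := Finset.exists_subset_card_eq hbig
    refine no_augment G k Φ hΦ A B C hA hB hAB heq.le (hcl.subset (by exact_mod_cast hCsub)) ?_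
      hCc hk
    intro v hv
    rcases Finset.mem_union.mp (hCsub hv) with h | h
    · exact Or.inl (hTA h)
    · exact Or.inr (Finset.sdiff_subset h)

theorem deg_pair {V : Type*} [Fintype V] (G : SimpleGraph V) [DecidableRel G.Adj] (k : ℕ)
    (D : ℝ) (hOre : ∀ x y : V, x ≠ y → ¬ G.Adj x y → 2 * D ≤ (G.degree x : ℝ) + (G.degree y : ℝ))
    (Φ : Finset (Finset V)) (hΦ : IsMaxCliqueCover G k Φ) (A B : Finset V)
    (hA : A ∈ Φ) (hB : B ∈ Φ) (hAB : A ≠ B) (heq : A.card = B.card) (hk : B.card + 1 ≤ k) :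
    2 * (A.card * D) ≤ ∑ v ∈ A, (G.degree v : ℝ) + ∑ v ∈ B, (G.degree v : ℝ) := by
  classical
  obtain ⟨f, hf, hfB⟩ := exists_matching G k Φ hΦ A B hA hB hAB heq hk
  have him : Finset.univ.image f = B := by
    apply Finset.eq_of_subset_of_card_le
    · intro u hu
      obtain ⟨a, _, rfl⟩ := Finset.mem_image.mp hu
      exact (hfB a).1
    · rw [Finset.card_image_of_injective _ hf]
      simp [heq]
  have dAB : Disjoint A B := hΦ.1.2.1 hA hB hAB
  rw [← him, Finset.sum_image (fun _ _ _ _ h => hf h), ← Finset.sum_coe_sort A,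
    ← Finset.sum_add_distrib]
  have : ∑ a : A, (2 * D) ≤ ∑ a : A, ((G.degree (a : V) : ℝ) + (G.degree (f a) : ℝ)) := by
    apply Finset.sum_le_sum
    intro a _
    apply hOre _ _ _ (hfB a).2
    intro h
    exact Finset.disjoint_left.mp dAB a.2 (h ▸ (hfB a).1)
  simp only [Finset.sum_const, Finset.card_univ, Fintype.card_coe, nsmul_eq_mul] at this
  linarith

theorem sum_deg_eq {V : Type*} [Fintype V] (G : SimpleGraph V) [DecidableRel G.Adj] (k : ℕ)
    (Φ : Finset (Finset V)) (hΦ : IsCliqueCover G k Φ) (K : Finset V) :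
    ∑ v ∈ K, G.degree v = ∑ S ∈ Φ, eBetween G K S := by
  classical
  unfold eBetween
  rw [Finset.sum_comm]
  apply Finset.sum_congr rfl
  intro v _
  rw [← Finset.card_biUnion]
  · rw [← SimpleGraph.card_neighborFinset_eq_degree]
    congr 1
    ext u
    simp only [SimpleGraph.mem_neighborFinset, Finset.mem_biUnion, Finset.mem_filter]
    constructor
    · intro h
      obtain ⟨S, hS, hu⟩ := hΦ.2.2 u
      exact ⟨S, hS, hu, h⟩
    · rintro ⟨_, _, _, h⟩
      exact h
  · intro S hS T hT hST
    exact (hΦ.2.1 hS hT hST).mono (Finset.filter_subset _ _) (Finset.filter_subset _ _)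

theorem card_eq_sum {V : Type*} [Fintype V] (G : SimpleGraph V) (k : ℕ)
    (Φ : Finset (Finset V)) (hΦ : IsCliqueCover G k Φ) :
    Fintype.card V = ∑ S ∈ Φ, S.card := by
  classical
  have h : (Finset.univ : Finset V) = Φ.biUnion id := by
    ext v
    simpa using hΦ.2.2 v
  rw [← Finset.card_univ, h, Finset.card_biUnion]
  · rfl
  · exact fun S hS T hT hST => hΦ.2.1 hS hT hST

theorem sum_cover {V : Type*} (G : SimpleGraph V) (k : ℕ)
    (Φ : Finset (Finset V)) (hΦ : IsCliqueCover G k Φ) (i₀ : ℕ)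
    (hempty : ∀ j, 1 ≤ j → j < i₀ → coverVec Φ j = 0) (f : ℕ → ℝ) (i : ℕ)
    (hi1 : 1 ≤ i) (hi2 : i ≤ k - i₀) :
    ∑ S ∈ Φ, f S.card = coverVec Φ k * f k + coverVec Φ (k - 1) * f (k - 1)
      + ∑ j ∈ Finset.Icc 2 i, coverVec Φ (k - j) * f (k - j)
      + ∑ j ∈ Finset.Icc (i + 1) (k - i₀), coverVec Φ (k - j) * f (k - j) := by
  classical
  have hmaps : ∀ S ∈ Φ, k - S.card ∈ Finset.Icc 0 (k - i₀) := by
    intro S hS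
    have h1 := hΦ.1 S hS
    rw [Finset.mem_Icc]
    refine ⟨Nat.zero_le _, ?_⟩
    by_contra hcon
    have := hempty S.card h1.2.1 (by omega)
    unfold coverVec at this
    rw [Finset.card_eq_zero] at this
    have hm : S ∈ Φ.filter fun T => T.card = S.card := by simp [hS]
    rw [this] at hm
    simp at hm
  have hsplit : Finset.Icc 0 (k - i₀) =
      insert 0 (insert 1 (Finset.Icc 2 i ∪ Finset.Icc (i + 1) (k - i₀))) := by
    ext j
    simp only [Finset.mem_Icc, Finset.mem_insert, Finset.mem_union]
    omega
  rw [← Finset.sum_fiberwise_of_maps_to hmaps]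
  have hfib : ∀ j ∈ Finset.Icc 0 (k - i₀),
      ∑ S ∈ Φ with k - S.card = j, f S.card = coverVec Φ (k - j) * f (k - j) := by
    intro j hj
    rw [Finset.mem_Icc] at hj
    have : (Φ.filter fun S => k - S.card = j) = Φ.filter fun S => S.card = k - j := by
      apply Finset.filter_congr
      intro S hS
      have h1 := hΦ.1 S hS
      omega
    rw [this, Finset.sum_congr rfl (g := fun _ => f (k - j)), Finset.sum_const, nsmul_eq_mul]
    · rfl
    · intro S hS
      rw [(Finset.mem_filter.mp hS).2]
  rw [Finset.sum_congr rfl hfib, hsplit, Finset.sum_insert, Finset.sum_insert, Finset.sum_union]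
  · simp only [Nat.sub_zero]
    ring
  · rw [Finset.disjoint_left]
    intro j
    simp only [Finset.mem_Icc]
    omega
  · simp only [Finset.mem_Icc, Finset.mem_union]
    omega
  · simp only [Finset.mem_Icc, Finset.mem_union, Finset.mem_insert]
    omega

/-- Counting bound for a clique whose degree sum is large. -/
theorem count_bound {V : Type*} [Fintype V] (G : SimpleGraph V) [DecidableRel G.Adj] (k : ℕ)
    (Φ : Finset (Finset V)) (hΦ : IsMaxCliqueCover G k Φ) (K : Finset V) (hK : K ∈ Φ)
    (hKk : K.card + 1 ≤ k)
    (hel : ¬ ∃ K' ∈ Φ, K'.card = k ∧ OverConn G K K') :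
    ∑ v ∈ K, (G.degree v : ℝ) ≤
      ∑ S ∈ Φ, (if S.card = k then (K.card : ℝ) * ((k : ℝ) - 1) - 1 else
        if K.card ≤ S.card then (K.card : ℝ) * ((S.card : ℝ) - 1)
          else (S.card : ℝ) * ((K.card : ℝ) - 1))
      + ({S : Finset V | S ∈ Φ ∧ S.card = k ∧ WellConn G K S}.ncard : ℝ) := by
  classical
  have hnc : ({S : Finset V | S ∈ Φ ∧ S.card = k ∧ WellConn G K S}.ncard : ℝ) =
      ∑ S ∈ Φ, (if S.card = k ∧ WellConn G K S then (1 : ℝ) else 0) := by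
    have : {S : Finset V | S ∈ Φ ∧ S.card = k ∧ WellConn G K S} =
        ((Φ.filter fun S => S.card = k ∧ WellConn G K S : Finset (Finset V)) :
          Set (Finset V)) := by
      ext S; simp
    rw [this, Set.ncard_coe_finset, Finset.card_filter]
    push_cast
    rfl
  rw [hnc, ← Finset.sum_add_distrib]
  have := sum_deg_eq G k Φ hΦ.1 K
  have h' : ∑ v ∈ K, (G.degree v : ℝ) = ∑ S ∈ Φ, (eBetween G K S : ℝ) := by exact_mod_cast this
  rw [h']
  apply Finset.sum_le_sum
  intro S hS
  have hS1 := (hΦ.1.1 S hS)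
  have hK1 := (hΦ.1.1 K hK)
  by_cases hSk : S.card = k
  · by_cases hw : WellConn G K S
    · have : eBetween G K S = K.card * (k - 1) := by
        unfold eBetween
        rw [Finset.sum_congr rfl hw, Finset.sum_const, hSk, smul_eq_mul]
      rw [this]
      push_cast [Nat.cast_sub (show 1 ≤ k by omega)]
      simp [hSk, hw]
    · have : eBetween G K S + 1 ≤ K.card * (k - 1) := by
        by_contra hcon
        exact hel ⟨S, hS, hSk, by rw [hSk]; omega, hw⟩
      have h2 : ((eBetween G K S + 1 : ℕ) : ℝ) ≤ ((K.card * (k - 1) : ℕ) : ℝ) := by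
        exact_mod_cast this
      push_cast [Nat.cast_sub (show 1 ≤ k by omega)] at h2
      simp only [hSk, hw, if_true, and_false, if_false]
      linarith
  · simp only [hSk, if_false, false_and, add_zero]
    split_ifs with hle
    · have := eBetween_le G k Φ hΦ K S hK hS hle (by omega)
      have h2 : ((eBetween G K S : ℕ) : ℝ) ≤ ((K.card * (S.card - 1) : ℕ) : ℝ) := by
        exact_mod_cast this
      push_cast [Nat.cast_sub hS1.2.1] at h2
      linarith
    · have := eBetween_le G k Φ hΦ S K hS hK (by omega) (by omega)
      rw [eBetween_comm'] at this
      have h2 : ((eBetween G K S : ℕ) : ℝ) ≤ ((S.card * (K.card - 1) : ℕ) : ℝ) := by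
        exact_mod_cast this
      push_cast [Nat.cast_sub hK1.2.1] at h2
      linarith

/-- **Proposition (λᵢ lower bound).** For all eligible `K ∈ Φ_{k-i}` (those not
over-connected to any `k`-clique of `Φ`), with at most one exception,
`|Λ(K)|/ℓ ≥ (k-1)γ + ((i-1)/(k-1))s + Σ_{2≤j≤i}(j-1)φ_{k-j} + (i-1)Σ_{i<j≤k-i₀}φ_{k-j}
 - (k-i)(d+2ε)`, where `Λ(K)` is the set of `k`-cliques of `Φ` well-connected to `K`. -/
theorem lambda_lower_bound {V : Type*} [Fintype V]
    (G : SimpleGraph V) [DecidableRel G.Adj]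
    (k : ℕ) (hk : 2 ≤ k) (γ d ε : ℝ) (hγ : 0 ≤ γ) (hd : 0 ≤ d) (hε : 0 ≤ ε)
    (hOre : ∀ x y : V, x ≠ y → ¬ G.Adj x y →
      2 * (1 - 1 / ((k : ℝ) - 1) + γ - d - 2 * ε) * (Fintype.card V) ≤
        (G.degree x : ℝ) + (G.degree y : ℝ))
    (Φ : Finset (Finset V)) (hΦ : IsMaxCliqueCover G k Φ)
    (i₀ : ℕ) (hi₀1 : 1 ≤ i₀) (hi₀k : i₀ < k)
    (hbig : k ≤ coverVec Φ i₀)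
    (hempty : ∀ j, 1 ≤ j → j < i₀ → coverVec Φ j = 0)
    (s : ℝ)
    (hs : (coverVec Φ k : ℝ) / (Fintype.card V : ℝ) =
      (∑ j ∈ Finset.Icc 2 (k - i₀),
        ((j : ℝ) - 1) * ((coverVec Φ (k - j) : ℝ) / (Fintype.card V : ℝ)))
      + ((k : ℝ) - 1) * γ + s)
    (i : ℕ) (hi1 : 1 ≤ i) (hi2 : i ≤ k - i₀) :
    ∃ K₀ : Finset V, ∀ K ∈ Φ, K.card = k - i →
      (¬ ∃ K' ∈ Φ, K'.card = k ∧ OverConn G K K') →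
      K ≠ K₀ →
      ((k : ℝ) - 1) * γ + (((i : ℝ) - 1) / ((k : ℝ) - 1)) * s
        + (∑ j ∈ Finset.Icc 2 i,
            ((j : ℝ) - 1) * ((coverVec Φ (k - j) : ℝ) / (Fintype.card V : ℝ)))
        + ((i : ℝ) - 1) * (∑ j ∈ Finset.Icc (i + 1) (k - i₀),
            (coverVec Φ (k - j) : ℝ) / (Fintype.card V : ℝ))
        - ((k : ℝ) - (i : ℝ)) * (d + 2 * ε)
      ≤ ({S : Finset V | S ∈ Φ ∧ S.card = k ∧ WellConn G K S}.ncard : ℝ) /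
          (Fintype.card V : ℝ) := by
  classical
  set D : ℝ := (1 - 1 / ((k : ℝ) - 1) + γ - d - 2 * ε) * (Fintype.card V) with hD
  have hOre' : ∀ x y : V, x ≠ y → ¬ G.Adj x y →
      2 * D ≤ (G.degree x : ℝ) + (G.degree y : ℝ) := by
    intro x y h1 h2
    have := hOre x y h1 h2
    rw [hD]; linarith
  -- it suffices to treat cliques of large degree sum
  have main : ∀ K ∈ Φ, K.card = k - i →
      (¬ ∃ K' ∈ Φ, K'.card = k ∧ OverConn G K K') →
      K.card * D ≤ ∑ v ∈ K, (G.degree v : ℝ) →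
      ((k : ℝ) - 1) * γ + (((i : ℝ) - 1) / ((k : ℝ) - 1)) * s
        + (∑ j ∈ Finset.Icc 2 i,
            ((j : ℝ) - 1) * ((coverVec Φ (k - j) : ℝ) / (Fintype.card V : ℝ)))
        + ((i : ℝ) - 1) * (∑ j ∈ Finset.Icc (i + 1) (k - i₀),
            (coverVec Φ (k - j) : ℝ) / (Fintype.card V : ℝ))
        - ((k : ℝ) - (i : ℝ)) * (d + 2 * ε)
      ≤ ({S : Finset V | S ∈ Φ ∧ S.card = k ∧ WellConn G K S}.ncard : ℝ) /
          (Fintype.card V : ℝ) := by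
    intro K hK hKc hel hdeg
    have hcnt := count_bound G k Φ hΦ K hK (by omega) hel
    set lam : ℝ := ({S : Finset V | S ∈ Φ ∧ S.card = k ∧ WellConn G K S}.ncard : ℝ)
    set L : ℝ := (Fintype.card V : ℝ) with hL
    have hKr : (K.card : ℝ) = (k : ℝ) - i := by
      rw [hKc, Nat.cast_sub (by omega)]
    have hLpos : 0 < L := by
      obtain ⟨v, _⟩ := Finset.card_pos.mp (show 0 < K.card by omega)
      have : 0 < Fintype.card V := Fintype.card_pos_iff.mpr ⟨v⟩
      rw [hL]; exact_mod_cast this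
    have hcard : L = ∑ S ∈ Φ, (S.card : ℝ) := by
      rw [hL]; exact_mod_cast card_eq_sum G k Φ hΦ.1
    rw [sum_cover G k Φ hΦ.1 i₀ hempty (fun t => (t : ℝ)) i hi1 hi2] at hcard
    rw [sum_cover G k Φ hΦ.1 i₀ hempty (fun t => if t = k then (K.card : ℝ) * ((k : ℝ) - 1) - 1 else
        if K.card ≤ t then (K.card : ℝ) * ((t : ℝ) - 1)
          else (t : ℝ) * ((K.card : ℝ) - 1)) i hi1 hi2] at hcnt
    simp only [if_true, if_neg (show k - 1 ≠ k by omega),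
      if_pos (show K.card ≤ k - 1 by omega)] at hcnt
    have e1 : ∑ j ∈ Finset.Icc 2 i, (coverVec Φ (k - j) : ℝ) *
        (if k - j = k then (K.card : ℝ) * ((k : ℝ) - 1) - 1 else
        if K.card ≤ k - j then (K.card : ℝ) * (((k - j : ℕ) : ℝ) - 1)
          else ((k - j : ℕ) : ℝ) * ((K.card : ℝ) - 1)) =
        ((k : ℝ) - i) * ((k - 2) * ∑ j ∈ Finset.Icc 2 i, (coverVec Φ (k - j) : ℝ)
          - ∑ j ∈ Finset.Icc 2 i, ((j : ℝ) - 1) * (coverVec Φ (k - j) : ℝ)) := by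
      rw [Finset.mul_sum, ← Finset.sum_sub_distrib, Finset.mul_sum]
      apply Finset.sum_congr rfl
      intro j hj
      rw [Finset.mem_Icc] at hj
      rw [if_neg (by omega), if_pos (by omega), hKr, Nat.cast_sub (by omega)]
      ring
    have e2 : ∑ j ∈ Finset.Icc (i + 1) (k - i₀), (coverVec Φ (k - j) : ℝ) *
        (if k - j = k then (K.card : ℝ) * ((k : ℝ) - 1) - 1 else
        if K.card ≤ k - j then (K.card : ℝ) * (((k - j : ℕ) : ℝ) - 1)
          else ((k - j : ℕ) : ℝ) * ((K.card : ℝ) - 1)) =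
        ((k : ℝ) - i - 1) * ((k - 1) * ∑ j ∈ Finset.Icc (i + 1) (k - i₀), (coverVec Φ (k - j) : ℝ)
          - ∑ j ∈ Finset.Icc (i + 1) (k - i₀), ((j : ℝ) - 1) * (coverVec Φ (k - j) : ℝ)) := by
      rw [Finset.mul_sum, ← Finset.sum_sub_distrib, Finset.mul_sum]
      apply Finset.sum_congr rfl
      intro j hj
      rw [Finset.mem_Icc] at hj
      rw [if_neg (by omega), if_neg (by omega), hKr, Nat.cast_sub (by omega)]
      ring
    have e3 : ∀ I ⊆ Finset.Icc 0 k, ∑ j ∈ I, (coverVec Φ (k - j) : ℝ) * ((k - j : ℕ) : ℝ) =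
        (k - 1) * ∑ j ∈ I, (coverVec Φ (k - j) : ℝ)
          - ∑ j ∈ I, ((j : ℝ) - 1) * (coverVec Φ (k - j) : ℝ) := by
      intro I hI
      rw [Finset.mul_sum, ← Finset.sum_sub_distrib]
      apply Finset.sum_congr rfl
      intro j hj
      have := hI hj
      rw [Finset.mem_Icc] at this
      rw [Nat.cast_sub (by omega)]
      ring
    rw [e3 _ (Finset.Icc_subset_Icc (by omega) (by omega)),
      e3 _ (Finset.Icc_subset_Icc (by omega) (by omega))] at hcard
    rw [e1, e2] at hcnt
    have e4 : ∑ j ∈ Finset.Icc 2 (k - i₀),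
        ((j : ℝ) - 1) * ((coverVec Φ (k - j) : ℝ) / L) =
        (∑ j ∈ Finset.Icc 2 i, ((j : ℝ) - 1) * (coverVec Φ (k - j) : ℝ)
        + ∑ j ∈ Finset.Icc (i + 1) (k - i₀), ((j : ℝ) - 1) * (coverVec Φ (k - j) : ℝ)) / L := by
      have : Finset.Icc 2 (k - i₀) = Finset.Icc 2 i ∪ Finset.Icc (i + 1) (k - i₀) := by
        ext j
        simp only [Finset.mem_Icc, Finset.mem_union]
        omega
      rw [this, Finset.sum_union, add_div, Finset.sum_div, Finset.sum_div]
      · simp only [mul_div_assoc]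
      · rw [Finset.disjoint_left]
        intro j
        simp only [Finset.mem_Icc]
        omega
    rw [e4] at hs
    simp only [← mul_div_assoc]
    rw [← Finset.sum_div, ← Finset.sum_div]
    rw [Nat.cast_sub (show 1 ≤ k by omega)] at hcard hcnt
    rw [hKr] at hcnt hdeg
    push_cast at hcard hcnt
    have hk1 : (0 : ℝ) < (k : ℝ) - 1 := by
      have : (2 : ℝ) ≤ k := by exact_mod_cast hk
      linarith
    generalize (∑ j ∈ Finset.Icc 2 i, ((j : ℝ) - 1) * (coverVec Φ (k - j) : ℝ)) = P1 at *
    generalize (∑ j ∈ Finset.Icc 2 i, (coverVec Φ (k - j) : ℝ)) = P0 at *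
    generalize (∑ j ∈ Finset.Icc (i + 1) (k - i₀), ((j : ℝ) - 1) * (coverVec Φ (k - j) : ℝ)) = Q1
      at *
    generalize (∑ j ∈ Finset.Icc (i + 1) (k - i₀), (coverVec Φ (k - j) : ℝ)) = Q0 at *
    generalize (coverVec Φ k : ℝ) = a0 at *
    generalize (coverVec Φ (k - 1) : ℝ) = a1 at *
    generalize (∑ v ∈ K, (G.degree v : ℝ)) = dg at *
    have hs' : s = (a0 - P1 - Q1) / L - ((k : ℝ) - 1) * γ := by
      rw [sub_div, sub_div]
      rw [add_div] at hs
      linarith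
    rw [le_div_iff₀ hLpos, hs']
    have hfin := hdeg.trans hcnt
    have hDe : D * ((k : ℝ) - 1) =
        L * ((k - 1) * (1 + γ - d - 2 * ε)) - L := by
      rw [hD]; field_simp; ring
    have hkey : (((k : ℝ) - 1) * γ + (((i : ℝ) - 1) / ((k : ℝ) - 1)) *
        ((a0 - P1 - Q1) / L - ((k : ℝ) - 1) * γ) + P1 / L + ((i : ℝ) - 1) * (Q0 / L)
        - ((k : ℝ) - (i : ℝ)) * (d + 2 * ε)) * L * ((k : ℝ) - 1) =
        (k - 1) * (k - 1) * γ * L + (i - 1) * ((a0 - P1 - Q1) - (k - 1) * γ * L) + (k - 1) * P1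
        + (k - 1) * (i - 1) * Q0 - (k - 1) * (k - i) * (d + 2 * ε) * L := by
      field_simp
      try ring
    refine le_of_mul_le_mul_right ?_ hk1
    have hfin2 := mul_le_mul_of_nonneg_right hfin hk1.le
    have hDe2 : ((k : ℝ) - i) * D * (k - 1) = (k - i) *
      (L * ((k - 1) * (1 + γ - d - 2 * ε)) - L) := by rw [← hDe]; ring
    rw [hDe2] at hfin2
    have hLe : L = a0 * k + a1 * (k - 1) + ((k - 1) * P0 - P1) + ((k - 1) * Q0 - Q1) := by
      linarith
    rw [hkey]
    have hz : (L - (a0 * k + a1 * (k - 1) + ((k - 1) * P0 - P1) + ((k - 1) * Q0 - Q1))) *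
      (((k : ℝ) - i) * (k - 1)) = 0 := by rw [sub_eq_zero.mpr hLe, zero_mul]
    have hz2 : (L - (a0 * k + a1 * (k - 1) + ((k - 1) * P0 - P1) + ((k - 1) * Q0 - Q1))) *
      ((k : ℝ) - i) = 0 := by rw [sub_eq_zero.mpr hLe, zero_mul]
    linarith only [hfin2, hz, hz2]
  by_cases hex : ∃ K ∈ Φ, K.card = k - i ∧ ∑ v ∈ K, (G.degree v : ℝ) < K.card * D
  · obtain ⟨K₀, hK₀, hc₀, hlt⟩ := hex
    refine ⟨K₀, fun K hK hc hel hne => main K hK hc hel ?_⟩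
    have := deg_pair G k D hOre' Φ hΦ K K₀ hK hK₀ hne (by omega) (by omega)
    have hcc : (K.card : ℝ) = K₀.card := by rw [hc, hc₀]
    rw [hcc] at this ⊢
    linarith
  · push Not at hex
    exact ⟨∅, fun K hK hc hel _ => main K hK hc hel (hex K hK hc)⟩
end

section
/- Let D be a finite loopless directed graph in which every vertex has out-degree at least δ. Then D has a sink set of size at most |V(D)|/(δ + 1). -/
/-- **Lemma (sink set).** Every finite loopless directed graph with minimum out-degree
at least `δ` has a sink set `S` (i.e. every vertex has a directed walk to some vertex of
`S`) of size at most `|V(D)|/(δ+1)`. -/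
theorem sink_set_bound {V : Type*} [Fintype V]
    (Adj : V → V → Prop) (hloopless : ∀ v, ¬ Adj v v)
    (δ : ℕ) (hδ : ∀ v : V, δ ≤ {w : V | Adj v w}.ncard) :
    ∃ S : Finset V,
      (∀ u : V, ∃ v ∈ S, Relation.ReflTransGen Adj u v) ∧
      (S.card : ℝ) ≤ (Fintype.card V : ℝ) / ((δ : ℝ) + 1) := by
  classical
  let R : V → Finset V := fun v => Finset.univ.filter (fun w => Relation.ReflTransGen Adj v w)
  have hR : ∀ v w, w ∈ R v ↔ Relation.ReflTransGen Adj v w := by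
    intro v w
    simp [R]
  have hcard : ∀ v, δ + 1 ≤ (R v).card := by
    intro v
    have h1 : insert v (Finset.univ.filter (fun w => Adj v w)) ⊆ R v := by
      intro w hw
      rw [hR]
      rcases Finset.mem_insert.1 hw with h | h
      · rw [h]
      · exact Relation.ReflTransGen.single (Finset.mem_filter.1 h).2
    have h2 := Finset.card_le_card h1
    rw [Finset.card_insert_of_notMem (by simp [hloopless])] at h2
    have h3 := hδ v
    rw [Set.ncard_eq_toFinset_card'] at h3
    have h4 : {w : V | Adj v w}.toFinset = Finset.univ.filter (fun w => Adj v w) := by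
      ext w
      simp
    rw [h4] at h3
    omega
  let P : Finset V → Prop := fun S =>
    (∀ v ∈ S, ∀ w, Relation.ReflTransGen Adj v w → Relation.ReflTransGen Adj w v) ∧
    (∀ u : V, ∃ v ∈ S, Relation.ReflTransGen Adj u v)
  have hne : (Finset.univ.filter P).Nonempty := by
    refine ⟨Finset.univ.filter (fun v => ∀ w, Relation.ReflTransGen Adj v w →
      Relation.ReflTransGen Adj w v), ?_⟩
    refine Finset.mem_filter.2 ⟨Finset.mem_univ _, fun v hv => (Finset.mem_filter.1 hv).2, ?_⟩
    intro u
    obtain ⟨w, hw, hmin⟩ := Finset.exists_min_image (R u) (fun w => (R w).card)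
      ⟨u, (hR u u).2 Relation.ReflTransGen.refl⟩
    rw [hR] at hw
    refine ⟨w, Finset.mem_filter.2 ⟨Finset.mem_univ _, fun x hx => ?_⟩, hw⟩
    have hsub : R x ⊆ R w := by
      intro y hy
      rw [hR] at hy ⊢
      exact hx.trans hy
    have heq := Finset.eq_of_subset_of_card_le hsub (hmin x ((hR _ _).2 (hw.trans hx)))
    rw [← hR, heq, hR]
  obtain ⟨S, hS, hmin⟩ := Finset.exists_min_image _ Finset.card hne
  obtain ⟨hT, hsink⟩ := (Finset.mem_filter.1 hS).2
  refine ⟨S, hsink, ?_⟩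
  have hdisj : ∀ v ∈ S, ∀ w ∈ S, v ≠ w → Disjoint (R v) (R w) := by
    intro v hv w hw hvw
    rw [Finset.disjoint_left]
    intro x hxv hxw
    rw [hR] at hxv hxw
    have hwv : Relation.ReflTransGen Adj w v := hxw.trans (hT v hv x hxv)
    have hP : P (S.erase w) := by
      refine ⟨fun y hy => hT y (Finset.mem_of_mem_erase hy), fun u => ?_⟩
      obtain ⟨y, hy, huy⟩ := hsink u
      by_cases hyw : y = w
      · subst hyw
        exact ⟨v, Finset.mem_erase.2 ⟨hvw, hv⟩, huy.trans hwv⟩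
      · exact ⟨y, Finset.mem_erase.2 ⟨hyw, hy⟩, huy⟩
    have h1 := hmin _ (Finset.mem_filter.2 ⟨Finset.mem_univ _, hP⟩)
    have h2 := Finset.card_erase_lt_of_mem hw
    omega
  have hsum : S.card * (δ + 1) ≤ Fintype.card V := by
    calc S.card * (δ + 1) ≤ ∑ v ∈ S, (R v).card := by
          rw [← smul_eq_mul]
          exact Finset.card_nsmul_le_sum S _ _ (fun v _ => hcard v)
      _ = (S.biUnion R).card := (Finset.card_biUnion hdisj).symm
      _ ≤ Fintype.card V := Finset.card_le_univ _
  rw [le_div_iff₀ (by positivity)]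
  exact_mod_cast hsum
end

section
/- Let G be a graph, let U₁ ⊆ V(G), let 0 ≤ ε₁ < 1/2, let i ≥ 1 be an integer, and let U_H be a nonempty subset of U₁ with |U_H| ≥ (1 − 2ε₁)|U₁|. Let δ₀ = min_{v ∈ U_H} |N(v) ∩ U₁| and let Δ₀ be the maximum degree of the induced subgraph G[U₁]. Then ν_i(G[U₁]) · 2(i+1) · Δ₀ ≥ (δ₀ − i + 1) · (1 − 2ε₁) · |U₁|, where ν_i(G[U₁]) is the maximum number of pairwise vertex-disjoint i-stars in G[U₁]. -/
/-- **Proposition (star matching).** Let `U_H ⊆ U₁` be nonempty with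
`|U_H| ≥ (1-2ε₁)|U₁|`, let `δ₀ = min_{v ∈ U_H} |N(v) ∩ U₁|` and let `Δ₀` be the maximum
degree of `G[U₁]`.  Then `ν_i(G[U₁]) · 2(i+1) · Δ₀ ≥ (δ₀ - i + 1)(1 - 2ε₁)|U₁|`, i.e.
there is a collection `𝒮` of pairwise vertex-disjoint `i`-stars in `G[U₁]` with
`|𝒮| · 2(i+1)Δ₀ ≥ (δ₀ - i + 1)(1 - 2ε₁)|U₁|`. -/
theorem star_tiling_bound {V : Type*} [Fintype V] [DecidableEq V]
    (G : SimpleGraph V) [DecidableRel G.Adj]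
    (U₁ UH : Finset V) (hsub : UH ⊆ U₁) (hne : UH.Nonempty)
    (ε₁ : ℝ) (hε₁0 : 0 ≤ ε₁) (hε₁ : ε₁ < 1 / 2)
    (hUH : (1 - 2 * ε₁) * (U₁.card : ℝ) ≤ (UH.card : ℝ))
    (i : ℕ) (hi : 1 ≤ i)
    (δ₀ Δ₀ : ℕ)
    (hδlb : ∀ v ∈ UH, δ₀ ≤ (U₁.filter fun u => G.Adj v u).card)
    (hδmem : ∃ v ∈ UH, (U₁.filter fun u => G.Adj v u).card = δ₀)
    (hΔub : ∀ v ∈ U₁, (U₁.filter fun u => G.Adj v u).card ≤ Δ₀)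
    (hΔmem : ∃ v ∈ U₁, (U₁.filter fun u => G.Adj v u).card = Δ₀) :
    ∃ 𝒮 : Finset (V × Finset V),
      (∀ p ∈ 𝒮, p.1 ∈ U₁ ∧ p.2 ⊆ U₁ ∧ p.2.card = i ∧ p.1 ∉ p.2 ∧
        ∀ v ∈ p.2, G.Adj p.1 v) ∧
      ((𝒮 : Set (V × Finset V)).Pairwise fun p q =>
        Disjoint (insert p.1 p.2) (insert q.1 q.2)) ∧
      ((δ₀ : ℝ) - (i : ℝ) + 1) * (1 - 2 * ε₁) * (U₁.card : ℝ) ≤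
        (𝒮.card : ℝ) * (2 * ((i : ℝ) + 1) * (Δ₀ : ℝ)) := by
  classical
  let P : Finset (V × Finset V) → Prop := fun S =>
      (∀ p ∈ S, p.1 ∈ U₁ ∧ p.2 ⊆ U₁ ∧ p.2.card = i ∧ p.1 ∉ p.2 ∧
        ∀ v ∈ p.2, G.Adj p.1 v) ∧
      ((S : Set (V × Finset V)).Pairwise fun p q =>
        Disjoint (insert p.1 p.2) (insert q.1 q.2))
  obtain ⟨S, hS, hmax⟩ := Finset.exists_max_image
    (Finset.univ.filter P) Finset.card ⟨∅, by simp [P]⟩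
  have hPS : P S := (Finset.mem_filter.1 hS).2
  obtain ⟨hS1, hS2⟩ := id hPS
  refine ⟨S, hS1, hS2, ?_⟩
  set C := S.biUnion fun p => insert p.1 p.2 with hC
  have hCU : C ⊆ U₁ := by
    intro x hx
    obtain ⟨p, hp, hx⟩ := Finset.mem_biUnion.1 hx
    rcases Finset.mem_insert.1 hx with h | h
    · exact h ▸ (hS1 p hp).1
    · exact (hS1 p hp).2.1 h
  have hCc : C.card ≤ S.card * (i + 1) := by
    apply Finset.card_biUnion_le_card_mul
    intro p hp
    have := Finset.card_insert_le p.1 p.2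
    rw [(hS1 p hp).2.2.1] at this
    exact this
  -- maximality
  have key : ∀ v ∈ UH \ C, ((U₁ \ C).filter fun u => G.Adj v u).card < i := by
    intro v hv
    obtain ⟨hvU, hvC⟩ := Finset.mem_sdiff.1 hv
    by_contra hlt
    obtain ⟨L, hL, hLc⟩ := Finset.exists_subset_card_eq (not_lt.1 hlt)
    have hL' : ∀ u ∈ L, u ∈ U₁ ∧ u ∉ C ∧ G.Adj v u := by
      intro u hu
      have := hL hu
      simp only [Finset.mem_filter, Finset.mem_sdiff] at this
      tauto
    have hdis : ∀ p ∈ S, Disjoint (insert v L) (insert p.1 p.2) := by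
      intro p hp
      rw [Finset.disjoint_left]
      intro x hx hxp
      have hxC : x ∈ C := Finset.mem_biUnion.2 ⟨p, hp, hxp⟩
      rcases Finset.mem_insert.1 hx with h | h
      · exact hvC (h ▸ hxC)
      · exact (hL' x h).2.1 hxC
    have hnot : (v, L) ∉ S := fun h =>
      hvC (Finset.mem_biUnion.2 ⟨_, h, Finset.mem_insert_self _ _⟩)
    have hP : P (insert (v, L) S) := by
      constructor
      · intro p hp
        rcases Finset.mem_insert.1 hp with h | h
        · subst h
          exact ⟨hsub hvU, fun u hu => (hL' u hu).1, hLc,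
            fun h => (hL' v h).2.2.ne rfl, fun u hu => (hL' u hu).2.2⟩
        · exact hS1 p h
      · rw [Finset.coe_insert]
        apply hS2.insert
        intro p hp _
        exact ⟨hdis p hp, (hdis p hp).symm⟩
    have := hmax _ (Finset.mem_filter.2 ⟨Finset.mem_univ _, hP⟩)
    rw [Finset.card_insert_of_notMem hnot] at this
    omega
  have hδΔ : δ₀ ≤ Δ₀ := by
    obtain ⟨v, hv, h⟩ := hδmem
    exact h ▸ hΔub v (hsub hv)
  have h1 : (UH \ C).card * (δ₀ + 1 - i) ≤ C.card * Δ₀ := by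
    apply Finset.card_mul_le_card_mul G.Adj
    · intro v hv
      have hk := key v hv
      have hd := hδlb v (Finset.mem_sdiff.1 hv).1
      have hsplit : (U₁.filter fun u => G.Adj v u) ⊆
          ((U₁ \ C).filter fun u => G.Adj v u) ∪ (C.filter fun u => G.Adj v u) := by
        intro x hx
        simp only [Finset.mem_union, Finset.mem_filter, Finset.mem_sdiff] at hx ⊢
        tauto
      have h2 := (Finset.card_le_card hsplit).trans (Finset.card_union_le _ _)
      unfold Finset.bipartiteAbove
      omega
    · intro b hb
      refine le_trans (Finset.card_le_card ?_) (hΔub b (hCU hb))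
      intro x hx
      simp only [Finset.bipartiteBelow, Finset.mem_filter, Finset.mem_sdiff] at hx ⊢
      exact ⟨hsub hx.1.1, hx.2.symm⟩
  have h2 : (UH ∩ C).card * (δ₀ + 1 - i) ≤ C.card * Δ₀ :=
    Nat.mul_le_mul (Finset.card_le_card Finset.inter_subset_right) (by omega)
  have h3 : UH.card * (δ₀ + 1 - i) ≤ S.card * (2 * (i + 1) * Δ₀) := by
    have e := Finset.card_sdiff_add_card_inter UH C
    have h4 := Nat.mul_le_mul_right Δ₀ hCc
    rw [← e]
    nlinarith
  have h3' : (UH.card : ℝ) * ((δ₀ + 1 - i : ℕ) : ℝ) ≤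
      (S.card : ℝ) * (2 * ((i : ℝ) + 1) * (Δ₀ : ℝ)) := by exact_mod_cast h3
  have h5 : (δ₀ : ℝ) - i + 1 ≤ ((δ₀ + 1 - i : ℕ) : ℝ) := by
    have : δ₀ + 1 ≤ (δ₀ + 1 - i) + i := by omega
    have : (δ₀ : ℝ) + 1 ≤ ((δ₀ + 1 - i : ℕ) : ℝ) + i := by exact_mod_cast this
    linarith
  have h6 : 0 ≤ (1 - 2 * ε₁) * (U₁.card : ℝ) :=
    mul_nonneg (by linarith) (Nat.cast_nonneg _)
  calc ((δ₀ : ℝ) - (i : ℝ) + 1) * (1 - 2 * ε₁) * (U₁.card : ℝ)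
      = ((δ₀ : ℝ) - (i : ℝ) + 1) * ((1 - 2 * ε₁) * (U₁.card : ℝ)) := by ring
    _ ≤ ((δ₀ + 1 - i : ℕ) : ℝ) * ((1 - 2 * ε₁) * (U₁.card : ℝ)) :=
        mul_le_mul_of_nonneg_right h5 h6
    _ ≤ ((δ₀ + 1 - i : ℕ) : ℝ) * (UH.card : ℝ) :=
        mul_le_mul_of_nonneg_left hUH (Nat.cast_nonneg _)
    _ ≤ _ := by rw [mul_comm]; exact h3'
end

section
/- Let G be a graph on n vertices, let k ≥ 2 be an integer, and let s be a natural number. If d(x) + d(y) ≥ 2(1 − 1/k)·n − 2s for all nonadjacent vertices x, y ∈ V(G), then G has a K_k-tiling covering all but at most k(k−1)s + (k−1)² vertices. -/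
set_option linter.unusedSectionVars false

namespace OreTiling

open Finset

variable {V : Type*} [Fintype V] [DecidableEq V]

/-- elementwise version of being a clique -/
def Cl (G : SimpleGraph V) (S : Finset V) : Prop :=
  ∀ u ∈ S, ∀ v ∈ S, u ≠ v → G.Adj u v

/-- families of disjoint nonempty cliques of size at most `k` -/
structure Good (G : SimpleGraph V) (k : ℕ) (P : Finset (Finset V)) : Prop where
  ne : ∀ A ∈ P, A.Nonempty
  le : ∀ A ∈ P, A.card ≤ k
  cl : ∀ A ∈ P, Cl G A
  dj : ∀ A ∈ P, ∀ B ∈ P, ∀ v, v ∈ A → v ∈ B → A = B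

/-- potential -/
def pot (P : Finset (Finset V)) : ℕ := ∑ A ∈ P, (Fintype.card V + 1) ^ A.card

/-- optimal families -/
structure Opt (G : SimpleGraph V) (k : ℕ) (P : Finset (Finset V)) : Prop extends Good G k P where
  opt : ∀ Q, Good G k Q → pot Q ≤ pot P

lemma exists_opt (G : SimpleGraph V) (k : ℕ) : ∃ P, Opt G k P := by
  classical
  obtain ⟨P, hP, hm⟩ := Finset.exists_max_image
    ((univ : Finset (Finset (Finset V))).filter (Good G k)) pot
    ⟨∅, by simp; constructor <;> simp⟩
  simp only [mem_filter, mem_univ, true_and] at hP hm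
  exact ⟨P, hP, hm⟩

lemma Good.card_le {G : SimpleGraph V} {k : ℕ} {P : Finset (Finset V)} (h : Good G k P) :
    P.card ≤ Fintype.card V := by
  classical
  choose f hf using h.ne
  rw [← Finset.card_univ, ← Finset.card_attach]
  apply Finset.card_le_card_of_injOn (fun A => f A.1 A.2) (fun _ _ => mem_univ _)
  intro A _ B _ hAB
  refine Subtype.ext (h.dj A A.2 B B.2 (f A A.2) (hf A A.2) ?_)
  have hAB' : f A.1 A.2 = f B.1 B.2 := hAB
  rw [hAB']
  exact hf B B.2

/-- one new clique -/
lemma Opt.one {G : SimpleGraph V} {k : ℕ} {P : Finset (Finset V)} (h : Opt G k P)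
    (Q : Finset V) (hQ : Cl G Q) (M : ℕ) (hM : M < k)
    (hs : ∀ A ∈ P, ∀ v ∈ A, v ∈ Q → A.card ≤ M) : Q.card ≤ M := by
  by_contra hc
  obtain ⟨Q', hsub, hcard⟩ := Finset.exists_subset_card_eq (show M + 1 ≤ Q.card by omega)
  have hg : Good G k (insert Q' (P.filter (fun A => Disjoint A Q'))) := by
    have hne : Q'.Nonempty := by rw [← card_pos]; omega
    constructor
    · intro A hA
      rcases mem_insert.1 hA with rfl | hA
      · exact hne
      · exact h.ne A (mem_filter.1 hA).1
    · intro A hA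
      rcases mem_insert.1 hA with rfl | hA
      · omega
      · exact h.le A (mem_filter.1 hA).1
    · intro A hA
      rcases mem_insert.1 hA with rfl | hA
      · exact fun u hu v hv => hQ u (hsub hu) v (hsub hv)
      · exact h.cl A (mem_filter.1 hA).1
    · intro A hA B hB v hvA hvB
      rcases mem_insert.1 hA with rfl | hA <;> rcases mem_insert.1 hB with rfl | hB
      · rfl
      · exact absurd hvA (Finset.disjoint_left.1 (mem_filter.1 hB).2 hvB)
      · exact absurd hvB (Finset.disjoint_left.1 (mem_filter.1 hA).2 hvA)
      · exact h.dj A (mem_filter.1 hA).1 B (mem_filter.1 hB).1 v hvA hvB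
  have h1 := h.opt _ hg
  unfold pot at h1
  rw [sum_insert, ← Finset.sum_filter_add_sum_filter_not P (fun A => Disjoint A Q'), hcard] at h1
  · have h2 : ∑ A ∈ P.filter (fun A => ¬ Disjoint A Q'), (Fintype.card V + 1) ^ A.card
        ≤ Fintype.card V * (Fintype.card V + 1) ^ M := by
      refine (Finset.sum_le_card_nsmul _ _ ((Fintype.card V + 1) ^ M) ?_).trans ?_
      · intro A hA
        obtain ⟨hA, hd⟩ := mem_filter.1 hA
        obtain ⟨v, hv, hv'⟩ := Finset.not_disjoint_iff.1 hd
        exact Nat.pow_le_pow_right (by omega) (hs A hA v hv (hsub hv'))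
      · rw [smul_eq_mul]
        exact Nat.mul_le_mul_right _ ((card_filter_le _ _).trans h.card_le)
    have h3 : (Fintype.card V + 1) ^ (M+1) =
      Fintype.card V * (Fintype.card V + 1) ^ M + (Fintype.card V + 1) ^ M := by ring
    have h4 : 0 < (Fintype.card V + 1) ^ M := by positivity
    omega
  · intro hmem
    have hd := (mem_filter.1 hmem).2
    rw [disjoint_self] at hd
    rw [hd] at hcard
    simp at hcard

/-- exchange through a full clique -/
lemma Opt.two {G : SimpleGraph V} {k : ℕ} {P : Finset (Finset V)} (h : Opt G k P)
    (C C' Q : Finset V) (hC' : Cl G C') (hCk : C.card = k) (hCk' : C'.card = k)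
    (hd : Disjoint C' Q)
    (hQ : Cl G Q) (M : ℕ) (hM : M < k)
    (hs : ∀ A ∈ P, A ≠ C → ∀ v ∈ A, v ∈ C' ∨ v ∈ Q → A.card ≤ M) : Q.card ≤ M := by
  by_contra hc
  obtain ⟨Q', hsub, hcard⟩ := Finset.exists_subset_card_eq (show M + 1 ≤ Q.card by omega)
  have hd' : Disjoint C' Q' := Finset.disjoint_of_subset_right hsub hd
  have hne : Q'.Nonempty := by rw [← card_pos]; omega
  have hne' : C'.Nonempty := by rw [← card_pos]; omega
  have hg : Good G k (insert C' (insert Q' (P.filter (fun A => Disjoint A (C' ∪ Q'))))) := by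
    constructor
    · intro A hA
      rcases mem_insert.1 hA with rfl | hA
      · exact hne'
      rcases mem_insert.1 hA with rfl | hA
      · exact hne
      · exact h.ne A (mem_filter.1 hA).1
    · intro A hA
      rcases mem_insert.1 hA with rfl | hA
      · omega
      rcases mem_insert.1 hA with rfl | hA
      · omega
      · exact h.le A (mem_filter.1 hA).1
    · intro A hA
      rcases mem_insert.1 hA with rfl | hA
      · exact hC'
      rcases mem_insert.1 hA with rfl | hA
      · exact fun u hu v hv => hQ u (hsub hu) v (hsub hv)
      · exact h.cl A (mem_filter.1 hA).1
    · have key : ∀ A ∈ P.filter (fun A => Disjoint A (C' ∪ Q')), ∀ v ∈ A, v ∉ C' ∧ v ∉ Q' := by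
        intro A hA v hv
        have := Finset.disjoint_left.1 (mem_filter.1 hA).2 hv
        simpa using this
      have key2 := Finset.disjoint_left.1 hd'
      have key3 : ∀ A ∈ P.filter (fun A => Disjoint A (C' ∪ Q')), A ∈ P :=
        fun A hA => (mem_filter.1 hA).1
      have := h.dj
      generalize P.filter (fun A => Disjoint A (C' ∪ Q')) = R at *
      intro A hA B hB v hvA hvB
      simp only [mem_insert] at hA hB
      rcases hA with h1 | h1 | h1 <;> rcases hB with h2 | h2 | h2
      · rw [h1, h2]
      · exact absurd (h2 ▸ hvB) (key2 (h1 ▸ hvA))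
      · exact absurd (h1 ▸ hvA) (key _ h2 _ hvB).1
      · exact absurd (h1 ▸ hvA) (key2 (h2 ▸ hvB))
      · rw [h1, h2]
      · exact absurd (h1 ▸ hvA) (key _ h2 _ hvB).2
      · exact absurd (h2 ▸ hvB) (key _ h1 _ hvA).1
      · exact absurd (h2 ▸ hvB) (key _ h1 _ hvA).2
      · exact this A (key3 A h1) B (key3 B h2) v hvA hvB
  have h1 := h.opt _ hg
  unfold pot at h1
  rw [sum_insert, sum_insert,
    ← Finset.sum_filter_add_sum_filter_not P (fun A => Disjoint A (C' ∪ Q')), hcard, hCk'] at h1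
  · have h2 : ∑ A ∈ P.filter (fun A => ¬ Disjoint A (C' ∪ Q')), (Fintype.card V + 1) ^ A.card
        ≤ (Fintype.card V + 1) ^ k + Fintype.card V * (Fintype.card V + 1) ^ M := by
      calc _ ≤ ∑ A ∈ insert C ((P.filter (fun A => ¬ Disjoint A (C' ∪ Q'))).erase C),
            (Fintype.card V + 1) ^ A.card := by
              apply Finset.sum_le_sum_of_subset
              intro A hA
              by_cases hAC : A = C
              · simp [hAC]
              · exact mem_insert_of_mem (mem_erase.2 ⟨hAC, hA⟩)
        _ = (Fintype.card V + 1) ^ k + ∑ A ∈ (P.filter (fun A => ¬ Disjoint A (C' ∪ Q'))).erase C,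
            (Fintype.card V + 1) ^ A.card := by
              rw [sum_insert (notMem_erase _ _), hCk]
        _ ≤ _ := by
          refine Nat.add_le_add_left ?_ _
          refine (Finset.sum_le_card_nsmul _ _ ((Fintype.card V + 1) ^ M) ?_).trans ?_
          · intro A hA
            obtain ⟨hAC, hA⟩ := mem_erase.1 hA
            obtain ⟨hA, hd⟩ := mem_filter.1 hA
            obtain ⟨v, hv, hv'⟩ := Finset.not_disjoint_iff.1 hd
            refine Nat.pow_le_pow_right (by omega) (hs A hA hAC v hv ?_)
            rcases mem_union.1 hv' with h | h
            · exact Or.inl h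
            · exact Or.inr (hsub h)
          · rw [smul_eq_mul]
            exact Nat.mul_le_mul_right _
              (((card_erase_le).trans (card_filter_le _ _)).trans h.card_le)
    have h3 : (Fintype.card V + 1) ^ (M+1) =
      Fintype.card V * (Fintype.card V + 1) ^ M + (Fintype.card V + 1) ^ M := by ring
    have h4 : 0 < (Fintype.card V + 1) ^ M := by positivity
    omega
  · intro hmem
    have hd := (mem_filter.1 hmem).2
    obtain ⟨v, hv⟩ := hne
    exact Finset.disjoint_left.1 hd hv (mem_union_right _ hv)
  · intro hmem
    obtain ⟨v, hv⟩ := hne'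
    rcases mem_insert.1 hmem with h | h
    · exact Finset.disjoint_left.1 hd' hv (h ▸ hv)
    · exact Finset.disjoint_left.1 (mem_filter.1 h).2 hv (mem_union_left _ hv)

variable (G : SimpleGraph V) [DecidableRel G.Adj]

/-- number of non-adjacent pairs -/
def N (S T : Finset V) : ℕ := ∑ u ∈ S, (T.filter (fun v => ¬ G.Adj u v)).card

lemma N_comm (S T : Finset V) : N G S T = N G T S := by
  unfold N
  simp only [card_filter]
  rw [sum_comm]
  simp only [G.adj_comm]

lemma le_N (S T : Finset V) (h : ∀ u ∈ S, ∃ v ∈ T, ¬ G.Adj u v) : S.card ≤ N G S T := by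
  unfold N
  rw [card_eq_sum_ones]
  apply sum_le_sum
  intro u hu
  obtain ⟨v, hv, hv'⟩ := h u hu
  exact card_pos.2 ⟨v, mem_filter.2 ⟨hv, hv'⟩⟩

variable {G} {k : ℕ} {P : Finset (Finset V)}

lemma Opt.cover (h : Opt G k P) (hk : 0 < k) (v : V) : ∃ A ∈ P, v ∈ A := by
  by_contra hc
  push Not at hc
  have := h.one {v} (by intro a ha b hb hab; simp at ha hb; subst ha hb; exact absurd rfl hab) 0 hk
    (by intro A hA u hu hu'; simp at hu'; subst hu'; exact absurd hu (hc A hA))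
  simp at this

lemma Opt.small (h : Opt G k P) {A B : Finset V} (hA : A ∈ P) (hB : B ∈ P)
    (hab : A.card ≤ B.card) (hb : B.card < k) : A.card ≤ N G A B := by
  apply le_N
  intro u hu
  by_contra! hc
  have huB : u ∉ B := fun hh => G.irrefl (hc u hh)
  have hcl : Cl G (insert u B) := by
    intro x hx y hy hxy
    rcases mem_insert.1 hx with h1 | h1 <;> rcases mem_insert.1 hy with h2 | h2
    · exact absurd (h1.trans h2.symm) hxy
    · exact h1 ▸ hc _ h2
    · exact h2 ▸ (hc _ h1).symm
    · exact h.cl B hB _ h1 _ h2 hxy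
  have := h.one (insert u B) hcl B.card hb (by
    intro D hD v hv hv'
    rcases mem_insert.1 hv' with rfl | hv'
    · rw [h.dj D hD A hA v hv hu]; exact hab
    · rw [h.dj D hD B hB v hv hv'])
  rw [card_insert_of_notMem huB] at this
  omega

/-- moving `X ⊆ A` into `C` and `Y ⊆ C` into `B`. -/
lemma Opt.move (h : Opt G k P) {A B C X Y : Finset V} (hA : A ∈ P) (hB : B ∈ P) (hC : C ∈ P)
    (hAB : A ≠ B) (ha : A.card < k) (hb : B.card < k) (hc : C.card = k)
    (hX : X ⊆ A) (hY : Y ⊆ C) (hXY : X.card = Y.card)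
    (hXC : ∀ u ∈ X, ∀ v ∈ C, G.Adj u v) (hYB : ∀ u ∈ Y, ∀ v ∈ B, G.Adj u v) :
    B.card + Y.card ≤ max A.card B.card := by
  have hAC : A ≠ C := by rintro rfl; omega
  have hBC : B ≠ C := by rintro rfl; omega
  have dAB : ∀ v, v ∈ A → v ∉ B := fun v h1 h2 => hAB (h.dj A hA B hB v h1 h2)
  have dAC : ∀ v, v ∈ A → v ∉ C := fun v h1 h2 => hAC (h.dj A hA C hC v h1 h2)
  have dBC : ∀ v, v ∈ B → v ∉ C := fun v h1 h2 => hBC (h.dj B hB C hC v h1 h2)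
  have := h.two C ((C \ Y) ∪ X) (B ∪ Y) ?_ hc ?_ ?_ ?_ (max A.card B.card) (by omega) ?_
  · rwa [card_union_of_disjoint] at this
    rw [Finset.disjoint_left]
    exact fun v h1 h2 => dBC v h1 (hY h2)
  · intro u hu v hv huv
    simp only [mem_union, mem_sdiff] at hu hv
    rcases hu with hu | hu <;> rcases hv with hv | hv
    · exact h.cl C hC _ hu.1 _ hv.1 huv
    · exact (hXC _ hv _ hu.1).symm
    · exact hXC _ hu _ hv.1
    · exact h.cl A hA _ (hX hu) _ (hX hv) huv
  · rw [card_union_of_disjoint, card_sdiff_of_subset hY]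
    · have := card_le_card hY
      omega
    · rw [Finset.disjoint_left]
      exact fun v h1 h2 => dAC v (hX h2) (mem_sdiff.1 h1).1
  · rw [Finset.disjoint_left]
    intro v h1 h2
    simp only [mem_union, mem_sdiff] at h1 h2
    rcases h1 with h1 | h1 <;> rcases h2 with h2 | h2
    · exact dBC v h2 h1.1
    · exact h1.2 h2
    · exact dAB v (hX h1) h2
    · exact dAC v (hX h1) (hY h2)
  · intro u hu v hv huv
    simp only [mem_union] at hu hv
    rcases hu with hu | hu <;> rcases hv with hv | hv
    · exact h.cl B hB _ hu _ hv huv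
    · exact (hYB _ hv _ hu).symm
    · exact hYB _ hu _ hv
    · exact h.cl C hC _ (hY hu) _ (hY hv) huv
  · intro D hD hDC v hv hv'
    simp only [mem_union, mem_sdiff] at hv'
    have : v ∈ C ∨ v ∈ A ∨ v ∈ B := by
      rcases hv' with (h1 | h1) | (h1 | h1)
      · exact Or.inl h1.1
      · exact Or.inr (Or.inl (hX h1))
      · exact Or.inr (Or.inr h1)
      · exact Or.inl (hY h1)
    rcases this with h1 | h1 | h1
    · exact absurd (h.dj D hD C hC v hv h1) hDC
    · rw [h.dj D hD A hA v hv h1]; exact le_max_left _ _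
    · rw [h.dj D hD B hB v hv h1]; exact le_max_right _ _

lemma Opt.single (h : Opt G k P) {A B C : Finset V} (hA : A ∈ P) (hB : B ∈ P) (hC : C ∈ P)
    (hAB : A ≠ B) (hab : A.card ≤ B.card) (hb : B.card < k) (hc : C.card = k)
    {u : V} (hu : u ∈ A) (huC : ∀ v ∈ C, G.Adj u v) : k ≤ N G B C := by
  rw [N_comm, ← hc]
  apply le_N
  intro w hw
  by_contra! hcon
  have := h.move (X := {u}) (Y := {w}) hA hB hC hAB (by omega) hb hc (by simpa) (by simpa)
    (by simp) (by simpa) (by simpa)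
  simp at this
  omega

/-- vertices complete to `C` -/
lemma rich (A C : Finset V) :
    A.card ≤ N G A C + (A.filter (fun u => ∀ v ∈ C, G.Adj u v)).card := by
  rw [← Finset.card_filter_add_card_filter_not (s := A) (fun u => ∀ v ∈ C, G.Adj u v)]
  have h1 := le_N G (A.filter (fun u => ¬ ∀ v ∈ C, G.Adj u v)) C (by
    intro u hu
    have := (mem_filter.1 hu).2
    push Not at this
    exact this)
  have h2 : N G (A.filter (fun u => ¬ ∀ v ∈ C, G.Adj u v)) C ≤ N G A C := by
    unfold N
    exact sum_le_sum_of_subset (filter_subset _ _)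
  omega

lemma Opt.multi (h : Opt G k P) {A B C : Finset V} (hA : A ∈ P) (hB : B ∈ P) (hC : C ∈ P)
    (hba : B.card < A.card) (ha : A.card < k) (hc : C.card = k)
    (hr : N G A C < A.card) :
    B.card ≤ N G B C ∧ (N G A C < B.card → B.card + 1 ≤ N G B C) := by
  have hAB : A ≠ B := by rintro rfl; omega
  have h1 : B.card ≤ N G B C := by
    apply le_N
    intro u hu
    by_contra! hcon
    have := h.single hB hA hC hAB.symm hba.le ha hc hu hcon
    omega
  refine ⟨h1, fun hlt => ?_⟩
  by_contra hcon
  have hW := rich (G := G) C B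
  rw [N_comm] at hW
  have hX := rich (G := G) A C
  obtain ⟨X, hX1, hX2⟩ := Finset.exists_subset_card_eq
    (show A.card - B.card + 1 ≤ (A.filter (fun u => ∀ v ∈ C, G.Adj u v)).card by omega)
  obtain ⟨Y, hY1, hY2⟩ := Finset.exists_subset_card_eq
    (show A.card - B.card + 1 ≤ (C.filter (fun u => ∀ v ∈ B, G.Adj u v)).card by omega)
  have := h.move (X := X) (Y := Y) hA hB hC hAB ha (by omega) hc
    (hX1.trans (filter_subset _ _)) (hY1.trans (filter_subset _ _)) (by omega)
    (fun u hu => (mem_filter.1 (hX1 hu)).2) (fun u hu => (mem_filter.1 (hY1 hu)).2)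
  rw [max_eq_left hba.le] at this
  omega

lemma Opt.full (h : Opt G k P) {C : Finset V} (hC : C ∈ P) (hc : C.card = k) (M : ℕ) (hM : M < k)
    (hI : ∀ v, 1 ≤ v → v ≤ M → M + 2 ≤ v + (P.filter (fun A => A.card ≤ M ∧ v ≤ A.card)).card) :
    ∑ A ∈ P.filter (fun A => A.card ≤ M), A.card
      ≤ ∑ A ∈ P.filter (fun A => A.card ≤ M), N G A C := by
  by_cases hr : ∀ A ∈ P.filter (fun A => A.card ≤ M), A.card ≤ N G A C
  · exact sum_le_sum hr
  push Not at hr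
  obtain ⟨A, hA, hr⟩ := hr
  have hA' := mem_filter.1 hA
  rw [← add_sum_erase _ _ hA, ← add_sum_erase _ _ hA]
  obtain ⟨u, hu⟩ : (A.filter (fun u => ∀ v ∈ C, G.Adj u v)).Nonempty := by
    rw [← card_pos]
    have := rich (G := G) A C
    omega
  obtain ⟨hu, huC⟩ := mem_filter.1 hu
  have hcnt := hI (N G A C + 1) (by omega) (by omega)
  have h1 : ∑ B ∈ (P.filter (fun A => A.card ≤ M)).erase A,
        (B.card + if N G A C + 1 ≤ B.card then 1 else 0) ≤
      ∑ B ∈ (P.filter (fun A => A.card ≤ M)).erase A, N G B C := by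
    apply sum_le_sum
    intro B hB
    obtain ⟨hBA, hB⟩ := mem_erase.1 hB
    obtain ⟨hB, hBM⟩ := mem_filter.1 hB
    rcases le_or_gt A.card B.card with hle | hlt
    · have := h.single hA'.1 hB hC hBA.symm hle (by omega) hc hu huC
      split_ifs <;> omega
    · have := h.multi hA'.1 hB hC hlt (by omega) hc hr
      split_ifs with hh
      · exact this.2 hh
      · exact this.1
  rw [sum_add_distrib, ← card_filter] at h1
  have h2 : (P.filter (fun B => B.card ≤ M ∧ N G A C + 1 ≤ B.card)).card ≤
      (((P.filter (fun A => A.card ≤ M)).erase A).filter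
        (fun B => N G A C + 1 ≤ B.card)).card + 1 := by
    refine (card_le_card (t := insert A _) ?_).trans (card_insert_le A _)
    intro B hB
    obtain ⟨hB, hBM, hB2⟩ := mem_filter.1 hB
    by_cases hBA : B = A
    · simp [hBA]
    · exact mem_insert_of_mem (mem_filter.2 ⟨mem_erase.2 ⟨hBA, mem_filter.2 ⟨hB, hBM⟩⟩, hB2⟩)
  omega

/-- number of non-neighbours, the vertex included -/
lemma Opt.ore (h : Opt G k P) (c M : ℕ) (hM : M < k) (U : Finset V) (g : V → ℕ)
    (hU : ∀ A ∈ P, ∀ v ∈ A, v ∈ U ↔ A.card ≤ M)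
    (hg : ∀ x y, x ≠ y → ¬ G.Adj x y → g x + g y ≤ 2 * c)
    {A B : Finset V} (hA : A ∈ P) (hB : B ∈ P) (hAB : A ≠ B) (ha : A.card = M) (hb : B.card = M) :
    ∑ u ∈ U, g u ≤ U.card * c := by
  classical
  set K := U.filter (fun u => c < g u) with hK
  have hKcl : Cl G K := by
    intro u hu v hv huv
    by_contra hc
    have := hg u v huv hc
    have := (mem_filter.1 hu).2
    have := (mem_filter.1 hv).2
    omega
  let t : K → Finset V := fun u => U.filter (fun v => (u : V) ≠ v ∧ ¬ G.Adj u v)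
  have hall : ∀ S : Finset K, S.card ≤ (S.biUnion t).card := by
    intro S
    set T := S.biUnion t with hT
    set S' : Finset V := S.map (Function.Embedding.subtype _) with hS'
    have hSc : S.card = S'.card := by rw [hS', card_map]
    have hS'K : S' ⊆ K := by
      intro x hx
      simp [hS'] at hx
      exact hx.1
    have hTm : ∀ v ∈ U, v ∉ T → ∀ u ∈ S', u ≠ v → G.Adj u v := by
      intro v hv hvT u hu huv
      by_contra hc
      apply hvT
      simp only [hS', mem_map] at hu
      obtain ⟨w, hw, rfl⟩ := hu
      exact mem_biUnion.2 ⟨w, hw, mem_filter.2 ⟨hv, huv, hc⟩⟩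
    have key : ∀ A ∈ P, A.card = M → (S' \ A).card ≤ (T ∩ A).card := by
      intro A hA ha
      have := h.one ((A \ T) ∪ (S' \ A)) ?_ M hM ?_
      · rw [card_union_of_disjoint] at this
        · have h3 := card_sdiff_add_card_inter A T
          rw [inter_comm] at h3
          omega
        · rw [Finset.disjoint_left]
          intro v h1 h2
          exact (mem_sdiff.1 h2).2 (mem_sdiff.1 h1).1
      · intro u hu v hv huv
        simp only [mem_union, mem_sdiff] at hu hv
        rcases hu with hu | hu <;> rcases hv with hv | hv
        · exact h.cl A hA _ hu.1 _ hv.1 huv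
        · exact (hTm u ((hU A hA u hu.1).2 ha.le) hu.2 v hv.1 huv.symm).symm
        · exact hTm v ((hU A hA v hv.1).2 ha.le) hv.2 u hu.1 huv
        · exact hKcl _ (hS'K hu.1) _ (hS'K hv.1) huv
      · intro D hD v hv hv'
        simp only [mem_union, mem_sdiff] at hv'
        rcases hv' with h1 | h1
        · rw [h.dj D hD A hA v hv h1.1, ha]
        · exact (hU D hD v hv).1 (mem_filter.1 (hS'K h1.1)).1
    have k1 := key A hA ha
    have k2 := key B hB hb
    have dAB : ∀ v, v ∈ A → v ∉ B := fun v h1 h2 => hAB (h.dj A hA B hB v h1 h2)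
    have h3 : (T ∩ A).card + (T ∩ B).card ≤ T.card := by
      rw [← card_union_of_disjoint]
      · apply card_le_card
        intro v hv
        simp only [mem_union, mem_inter] at hv
        tauto
      · rw [Finset.disjoint_left]
        intro v h1 h2
        exact dAB v (mem_inter.1 h1).2 (mem_inter.1 h2).2
    have h4 : S'.card ≤ (S' \ A).card + (S' \ B).card := by
      refine (card_le_card ?_).trans (card_union_le _ _)
      intro v hv
      have := dAB v
      simp only [mem_union, mem_sdiff]
      tauto
    omega
  obtain ⟨f, hinj, hf⟩ := (Finset.all_card_le_biUnion_card_iff_exists_injective t).1 hall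
  have hf' : ∀ u : K, f u ∈ U ∧ (u : V) ≠ f u ∧ ¬ G.Adj u (f u) := fun u => mem_filter.1 (hf u)
  set R : Finset V := (univ : Finset K).map ⟨f, hinj⟩ with hR
  have hRU : R ⊆ U \ K := by
    intro v hv
    simp only [hR, mem_map, mem_univ, true_and] at hv
    obtain ⟨u, rfl⟩ := hv
    refine mem_sdiff.2 ⟨(hf' u).1, fun hh => ?_⟩
    exact (hf' u).2.2 (hKcl _ u.2 _ hh (hf' u).2.1)
  have hKU : K ⊆ U := filter_subset _ _
  have e1 : ∑ u ∈ K, g u + ∑ u ∈ R, g u ≤ K.card * c + R.card * c := by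
    have hRc : R.card = K.card := by simp [hR]
    rw [hR, sum_map, ← hR, hRc, ← sum_coe_sort K, ← sum_add_distrib]
    calc _ ≤ ∑ u : K, 2 * c := sum_le_sum (fun u _ => hg _ _ (hf' u).2.1 (hf' u).2.2)
      _ = _ := by simp; ring
  have e2 : ∑ u ∈ (U \ K) \ R, g u ≤ ((U \ K) \ R).card * c := by
    rw [← smul_eq_mul]
    apply sum_le_card_nsmul
    intro u hu
    simp only [mem_sdiff, hK, mem_filter, not_and, not_lt] at hu
    exact hu.1.2 hu.1.1
  have e3 := sum_sdiff (f := g) hKU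
  have e4 := sum_sdiff (f := g) hRU
  have e5 := card_sdiff_add_card_eq_card hKU
  have e6 := card_sdiff_add_card_eq_card hRU
  rw [← e3, ← e4, ← e5, ← e6]
  nlinarith

lemma Opt.final (h : Opt G k P) (s : ℕ) (hk : 2 ≤ k)
    (hg : ∀ x y, x ≠ y → ¬ G.Adj x y →
      k * (univ.filter (fun v => ¬ G.Adj x v)).card + k * (univ.filter (fun v => ¬ G.Adj y v)).card
        ≤ 2 * (Fintype.card V + k * s)) :
    (P.filter (fun A => A.card < k)).card < k * s + k := by
  classical
  by_contra! hcon
  have hex : ∃ M, M + 1 ≤ (P.filter (fun A => A.card ≤ M)).card := by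
    refine ⟨k - 1, ?_⟩
    have : P.filter (fun A => A.card ≤ k - 1) = P.filter (fun A => A.card < k) := by
      apply filter_congr
      intro A _
      omega
    rw [this]
    have : 0 ≤ k * s := by positivity
    omega
  obtain ⟨M, hM1, hM2⟩ : ∃ M, M + 1 ≤ (P.filter (fun A => A.card ≤ M)).card ∧
      ∀ m < M, (P.filter (fun A => A.card ≤ m)).card ≤ m := by
    refine ⟨Nat.find hex, Nat.find_spec hex, fun m hm => ?_⟩
    have := Nat.find_min hex hm
    omega
  have hMk : M < k := by
    by_contra hc
    have := hM2 (k - 1) (by omega)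
    have h2 : P.filter (fun A => A.card ≤ k - 1) = P.filter (fun A => A.card < k) := by
      apply filter_congr
      intro A _
      omega
    rw [h2] at this
    have : 0 ≤ k * s := by positivity
    omega
  have hMpos : 1 ≤ M := by
    by_contra hc
    have : M = 0 := by omega
    subst this
    obtain ⟨A, hA⟩ := card_pos.1 (show 0 < (P.filter (fun A => A.card ≤ 0)).card by omega)
    obtain ⟨hA, hA0⟩ := mem_filter.1 hA
    have := card_pos.2 (h.ne A hA)
    omega
  have hI : ∀ v, 1 ≤ v → v ≤ M →
      M + 2 ≤ v + (P.filter (fun A => A.card ≤ M ∧ v ≤ A.card)).card := by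
    intro v hv hvM
    have h1 := hM2 (v - 1) (by omega)
    have h2 : (P.filter (fun A => A.card ≤ M)).card ≤
        (P.filter (fun A => A.card ≤ v - 1)).card +
        (P.filter (fun A => A.card ≤ M ∧ v ≤ A.card)).card := by
      refine (card_le_card ?_).trans (card_union_le _ _)
      intro A hA
      simp only [mem_union, mem_filter] at hA ⊢
      by_cases hv : v ≤ A.card
      · exact Or.inr ⟨hA.1, hA.2, hv⟩
      · exact Or.inl ⟨hA.1, by omega⟩
    omega
  -- the two top cliques
  obtain ⟨A, hA, B, hB, hAB⟩ := one_lt_card.1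
    (show 1 < (P.filter (fun A => A.card ≤ M ∧ M ≤ A.card)).card by
      have := hI M hMpos le_rfl
      omega)
  obtain ⟨hA, ha1, ha2⟩ := mem_filter.1 hA
  obtain ⟨hB, hb1, hb2⟩ := mem_filter.1 hB
  set I := P.filter (fun A => A.card ≤ M) with hIdef
  set U := I.biUnion id with hUdef
  have hIP : ∀ A ∈ I, A ∈ P ∧ A.card ≤ M := fun A hA => mem_filter.1 hA
  have hU : ∀ A ∈ P, ∀ v ∈ A, v ∈ U ↔ A.card ≤ M := by
    intro A hA v hv
    rw [hUdef, mem_biUnion]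
    constructor
    · rintro ⟨B, hB, hvB⟩
      rw [h.dj A hA B (hIP B hB).1 v hv hvB]
      exact (hIP B hB).2
    · intro hle
      exact ⟨A, mem_filter.2 ⟨hA, hle⟩, hv⟩
  have hore := h.ore (Fintype.card V + k * s) M hMk U
    (fun u => k * (univ.filter (fun v => ¬ G.Adj u v)).card) hU hg hA hB hAB (by omega) (by omega)
  have hdP : (P : Set (Finset V)).PairwiseDisjoint id := by
    intro A hA B hB hAB
    simp only [Function.onFun, id]
    rw [Finset.disjoint_left]
    exact fun v h1 h2 => hAB (h.dj A hA B hB v h1 h2)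
  have hdI : (I : Set (Finset V)).PairwiseDisjoint id :=
    hdP.subset (by intro A hA; exact (hIP A hA).1)
  have hPU : P.biUnion id = univ := by
    ext v
    simp only [mem_biUnion, mem_univ, iff_true, id]
    exact h.cover (by omega) v
  have hn : Fintype.card V = ∑ A ∈ P, A.card := by
    rw [← card_univ, ← hPU, card_biUnion hdP]
    rfl
  have hUc : U.card = ∑ A ∈ I, A.card := by
    rw [hUdef, card_biUnion hdI]
    rfl
  have hnb : ∀ u, (univ.filter (fun v => ¬ G.Adj u v)).card =
      ∑ D ∈ P, (D.filter (fun v => ¬ G.Adj u v)).card := by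
    intro u
    rw [← hPU, filter_biUnion, card_biUnion]
    · rfl
    · intro A hA B hB hAB
      exact disjoint_filter_filter (hdP hA hB hAB)
  have hsum : ∑ u ∈ U, k * (univ.filter (fun v => ¬ G.Adj u v)).card =
      ∑ D ∈ P, k * ∑ A ∈ I, N G A D := by
    simp_rw [hnb]
    rw [← mul_sum, ← mul_sum]
    congr 1
    rw [sum_comm]
    apply sum_congr rfl
    intro D _
    rw [hUdef, sum_biUnion hdI]
    rfl
  have hpart : ∀ D ∈ P, U.card * D.card + (if M ≤ D.card ∧ D.card < k then U.card else 0) ≤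
      k * ∑ A ∈ I, N G A D := by
    intro D hD
    rcases (h.le D hD).lt_or_eq with hlt | heq
    · rw [hUc, sum_mul, mul_sum]
      by_cases hMD : M ≤ D.card
      · rw [if_pos ⟨hMD, hlt⟩, ← sum_add_distrib]
        apply sum_le_sum
        intro A hA
        have := h.small (hIP A hA).1 hD ((hIP A hA).2.trans hMD) hlt
        nlinarith
      · rw [if_neg (by tauto), add_zero]
        apply sum_le_sum
        intro A hA
        have hAk := (hIP A hA).2
        rcases le_total A.card D.card with hle | hle
        · have := h.small (hIP A hA).1 hD hle hlt
          nlinarith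
        · have := h.small hD (hIP A hA).1 hle (by omega)
          rw [N_comm] at this
          nlinarith
    · have := h.full hD heq M hMk hI
      rw [if_neg (by omega), heq, hUc, add_zero, mul_comm]
      exact Nat.mul_le_mul_left _ this
  have htot := sum_le_sum hpart
  rw [← hsum, sum_add_distrib, ← mul_sum, ← hn, ← sum_filter, sum_const, smul_eq_mul] at htot
  have hcount : k * s + 1 ≤ (P.filter (fun D => M ≤ D.card ∧ D.card < k)).card := by
    have h1 := hM2 (M - 1) (by omega)
    have h2 : (P.filter (fun A => A.card < k)).card ≤
        (P.filter (fun A => A.card ≤ M - 1)).card +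
        (P.filter (fun D => M ≤ D.card ∧ D.card < k)).card := by
      refine (card_le_card ?_).trans (card_union_le _ _)
      intro A hA
      simp only [mem_union, mem_filter] at hA ⊢
      by_cases hv : M ≤ A.card
      · exact Or.inr ⟨hA.1, hv, hA.2⟩
      · exact Or.inl ⟨hA.1, by omega⟩
    omega
  have hUpos : 0 < U.card := by
    rw [card_pos]
    obtain ⟨v, hv⟩ := h.ne A hA
    exact ⟨v, (hU A hA v hv).2 ha1⟩
  have := Nat.mul_le_mul_right U.card hcount
  nlinarith

end OreTiling


/-- **Lemma.** If every pair of distinct nonadjacent vertices of an `n`-vertex graph `G`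
satisfies `d(x) + d(y) ≥ 2(1 - 1/k)n - 2s`, then `G` has a `K_k`-tiling covering all but
at most `k(k-1)s + (k-1)²` vertices. -/
theorem ore_kk_tiling {V : Type*} [Fintype V] [DecidableEq V]
    (G : SimpleGraph V) [DecidableRel G.Adj]
    (k : ℕ) (hk : 2 ≤ k) (s : ℕ)
    (hOre : ∀ x y : V, x ≠ y → ¬ G.Adj x y →
      2 * (1 - 1 / (k : ℝ)) * (Fintype.card V) - 2 * (s : ℝ) ≤
        (G.degree x : ℝ) + (G.degree y : ℝ)) :
    ∃ 𝒯 : Finset (Finset V),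
      (∀ S ∈ 𝒯, S.card = k ∧ G.IsClique (S : Set V)) ∧
      ((𝒯 : Set (Finset V)).Pairwise fun S T => Disjoint S T) ∧
      Fintype.card V - (𝒯.biUnion id).card ≤ k * (k - 1) * s + (k - 1) ^ 2 := by
  classical
  obtain ⟨P, hP⟩ := OreTiling.exists_opt G k
  have hfin := hP.final s hk (by
    intro x y hxy hadj
    have h1 := hOre x y hxy hadj
    have hd : ∀ z, (Finset.univ.filter (fun v => ¬ G.Adj z v)).card + G.degree z
        = Fintype.card V := by
      intro z
      have h2 := Finset.card_filter_add_card_filter_not (s := (Finset.univ : Finset V))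
        (fun v => G.Adj z v)
      have h3 : (Finset.univ.filter (fun v => G.Adj z v)).card = G.degree z := by
        rw [← SimpleGraph.card_neighborFinset_eq_degree]
        congr 1
        ext v
        simp
      rw [h3, Finset.card_univ] at h2
      omega
    have hx : ((Finset.univ.filter (fun v => ¬ G.Adj x v)).card : ℝ) + G.degree x
        = Fintype.card V := by exact_mod_cast hd x
    have hy : ((Finset.univ.filter (fun v => ¬ G.Adj y v)).card : ℝ) + G.degree y
        = Fintype.card V := by exact_mod_cast hd y
    have hk0 : (0 : ℝ) < k := by positivity
    have h4 := mul_le_mul_of_nonneg_left h1 hk0.le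
    have h5 : (k : ℝ) * (2 * (1 - 1 / (k : ℝ)) * (Fintype.card V) - 2 * (s : ℝ)) =
        2 * k * Fintype.card V - 2 * Fintype.card V - 2 * k * s := by
      field_simp
    rw [h5] at h4
    have h6 : (k : ℝ) * (Finset.univ.filter (fun v => ¬ G.Adj x v)).card
        + k * (Finset.univ.filter (fun v => ¬ G.Adj y v)).card
        ≤ 2 * (Fintype.card V + k * s) := by
      rw [eq_sub_of_add_eq hx, eq_sub_of_add_eq hy]
      linarith
    exact_mod_cast h6)
  refine ⟨P.filter (fun A => A.card = k), ?_, ?_, ?_⟩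
  · intro S hS
    obtain ⟨hS, hc⟩ := Finset.mem_filter.1 hS
    refine ⟨hc, ?_⟩
    intro u hu v hv huv
    exact hP.cl S hS u hu v hv huv
  · intro S hS T hT hST
    have hS := (Finset.mem_filter.1 hS).1
    have hT := (Finset.mem_filter.1 hT).1
    rw [Finset.disjoint_left]
    exact fun v h1 h2 => hST (hP.dj S hS T hT v h1 h2)
  · have h1 : Fintype.card V ≤ ((P.filter (fun A => A.card = k)).biUnion id).card
        + ((P.filter (fun A => A.card < k)).biUnion id).card := by
      rw [← Finset.card_univ]
      refine (Finset.card_le_card ?_).trans (Finset.card_union_le _ _)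
      intro v _
      obtain ⟨A, hA, hv⟩ := hP.cover (by omega) v
      rcases (hP.le A hA).lt_or_eq with hlt | heq
      · exact Finset.mem_union_right _
          (Finset.mem_biUnion.2 ⟨A, Finset.mem_filter.2 ⟨hA, hlt⟩, hv⟩)
      · exact Finset.mem_union_left _
          (Finset.mem_biUnion.2 ⟨A, Finset.mem_filter.2 ⟨hA, heq⟩, hv⟩)
    have h2 : ((P.filter (fun A => A.card < k)).biUnion id).card
        ≤ (P.filter (fun A => A.card < k)).card * (k - 1) := by
      apply Finset.card_biUnion_le_card_mul
      intro A hA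
      have := (Finset.mem_filter.1 hA).2
      simp only [id]
      omega
    have h3 : (P.filter (fun A => A.card < k)).card * (k - 1) ≤ (k * s + (k - 1)) * (k - 1) :=
      Nat.mul_le_mul_right _ (by omega)
    have h4 : (k * s + (k - 1)) * (k - 1) = k * (k - 1) * s + (k - 1) ^ 2 := by ring
    omega
end
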